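/- Let n ≥ 2 and let q > 2 be a prime power. Let Σ be a nonempty family of hyperplanes of PG(2n+1,q) satisfying properties (P1^+) and (P2). Then there exists a nonsingular hyperbolic quadratic form φ on V = F^{2n+2}, with hyperbolic quadric Q = Q^+(2n+1,q), such that Σ is exactly the set of all hyperplanes of PG(2n+1,q) that are parabolic with respect to Q, i.e. that contain exactly (q^{2n}−1)/(q−1) points of Q. -/

import Mathlib

lemma aux_sep {F V : Type*} [Field F] [AddCommGroup V] [Module F V] (U : Submodule F V) (v : V)
    (hv : v ∉ U) : ∃ f : Module.Dual F V, f v ≠ 0 ∧ ∀ w ∈ U, f w = 0 := by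
  obtain ⟨f, hf, hfU⟩ := Submodule.exists_dual_map_eq_bot_of_notMem hv inferInstance
  refine ⟨f, hf, fun w hw => ?_⟩
  have : f w ∈ Submodule.map f U := ⟨w, hw, rfl⟩
  rw [hfU] at this
  simpa using this

section Helpers
open Finset Classical

lemma aux_cardSub {F V : Type*} [Field F] [Fintype F] [AddCommGroup V] [Module F V] [Fintype V]
    (U : Submodule F V) :
    (univ.filter (fun v : V => v ∈ U)).card = Fintype.card F ^ Module.finrank F U := by
  rw [← Module.card_eq_pow_finrank (K := F) (V := U)]
  rw [Fintype.card_subtype]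

/-- a nonzero functional on a finite space -/
lemma aux_cardKer {F V : Type*} [Field F] [Fintype F] [AddCommGroup V] [Module F V] [Fintype V]
    (W : Submodule F V) (g : V →ₗ[F] F) (hg : ∃ w ∈ W, g w ≠ 0) :
    Fintype.card F * (univ.filter (fun v : V => v ∈ W ∧ g v = 0)).card
      = (univ.filter (fun v : V => v ∈ W)).card := by
  obtain ⟨w, hw, hgw⟩ := hg
  have hne : g.domRestrict W ≠ 0 := by
    intro h
    exact hgw (by simpa using LinearMap.congr_fun h ⟨w, hw⟩)
  have h1 := Module.Dual.finrank_ker_add_one_of_ne_zero (K := F) (f := g.domRestrict W) hne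
  have h2 : (univ.filter (fun v : V => v ∈ W ∧ g v = 0)).card =
      (univ.filter (fun v : V => v ∈ (LinearMap.ker (g.domRestrict W)).map W.subtype)).card := by
    congr 1
    ext v
    simp only [mem_filter, mem_univ, true_and, Submodule.mem_map, LinearMap.mem_ker]
    constructor
    · rintro ⟨h, h'⟩
      exact ⟨⟨v, h⟩, by simpa using h', rfl⟩
    · rintro ⟨y, h, rfl⟩
      exact ⟨y.2, by simpa using h⟩
  rw [h2, aux_cardSub, aux_cardSub, ← h1]
  rw [LinearEquiv.finrank_eq ((LinearMap.ker (g.domRestrict W)).equivMapOfInjective W.subtype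
    W.injective_subtype).symm]
  ring

/-- summing the hyperplane intersections over the annihilator of `U` -/
lemma aux_sumx {F V : Type*} [Field F] [Fintype F] [AddCommGroup V] [Module F V] [Fintype V]
    [Fintype (Module.Dual F V)] (Q : Finset V) (U : Submodule F V) :
    Fintype.card F * ∑ h ∈ univ.filter (fun h : Module.Dual F V => h ∈ U.dualAnnihilator),
        (Q.filter (fun v => h v = 0)).card
      = (univ.filter (fun h : Module.Dual F V => h ∈ U.dualAnnihilator)).card *
        (Fintype.card F * (Q.filter (fun v => v ∈ U)).card + (Q.filter (fun v => v ∉ U)).card) := by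
  have hsw := Finset.sum_card_bipartiteAbove_eq_sum_card_bipartiteBelow
    (fun (h : Module.Dual F V) (v : V) => h v = 0)
    (s := univ.filter (fun h : Module.Dual F V => h ∈ U.dualAnnihilator)) (t := Q)
  simp only [Finset.bipartiteAbove, Finset.bipartiteBelow] at hsw
  rw [hsw, ← Finset.sum_filter_add_sum_filter_not Q (fun v => v ∈ U), mul_add, mul_add]
  congr 1
  · rw [Finset.sum_congr rfl (g := fun _ => (univ.filter
      (fun h : Module.Dual F V => h ∈ U.dualAnnihilator)).card)]
    · rw [sum_const, smul_eq_mul]; ring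
    · intro v hv
      rw [Finset.filter_true_of_mem]
      intro h hh
      simp only [mem_filter, mem_univ, true_and, Submodule.mem_dualAnnihilator] at hh hv
      exact hh v hv.2
  · rw [Finset.mul_sum, Finset.sum_congr rfl (g := fun _ => (univ.filter
      (fun h : Module.Dual F V => h ∈ U.dualAnnihilator)).card)]
    · rw [sum_const, smul_eq_mul]; ring
    · intro v hv
      rw [Finset.filter_filter]
      have := aux_cardKer U.dualAnnihilator (Module.Dual.eval F V v) (by
        simp only [mem_filter] at hv
        obtain ⟨f, hf, hfU⟩ := aux_sep U v hv.2
        exact ⟨f, (Submodule.mem_dualAnnihilator f).2 hfU, by simpa using hf⟩)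
      simpa using this

/-- fibres of a functional on a cone -/
lemma aux_fibre {F V : Type*} [Field F] [Fintype F] [AddCommGroup V] [Module F V]
    (Q : Finset V) (hsm : ∀ (c : F), ∀ v ∈ Q, c • v ∈ Q) (h : V →ₗ[F] F) (t : F) (ht : t ≠ 0) :
    (Fintype.card F - 1) * (Q.filter (fun v => h v = t)).card
      + (Q.filter (fun v => h v = 0)).card = Q.card := by
  have h1 := Finset.card_eq_sum_card_fiberwise (f := h) (s := Q) (t := univ)
    (fun _ _ => by simp)
  rw [h1, ← Finset.sum_erase_add univ _ (mem_univ (0 : F))]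
  congr 1
  rw [Finset.sum_congr rfl (g := fun _ => (Q.filter (fun v => h v = t)).card)]
  · rw [sum_const, card_erase_of_mem (mem_univ _), card_univ, smul_eq_mul]
  · intro s hs
    have hs0 : s ≠ 0 := by simpa using hs
    refine Finset.card_bij' (fun v _ => (t / s) • v) (fun v _ => (s / t) • v) ?_ ?_ ?_ ?_
    · intro v hv
      simp only [mem_filter] at hv ⊢
      refine ⟨hsm _ _ hv.1, ?_⟩
      rw [map_smul, hv.2]; simp; field_simp
    · intro v hv
      simp only [mem_filter] at hv ⊢
      refine ⟨hsm _ _ hv.1, ?_⟩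
      rw [map_smul, hv.2]; simp; field_simp
    · intro v hv
      rw [smul_smul]
      have : s / t * (t / s) = 1 := by field_simp
      rw [this, one_smul]
    · intro v hv
      rw [smul_smul]
      have : t / s * (s / t) = 1 := by field_simp
      rw [this, one_smul]

/-- the correlation identity -/
lemma aux_corr {F V : Type*} [Field F] [Fintype F] [AddCommGroup V] [Module F V] [Fintype V]
    [Fintype (Module.Dual F V)] (Q : Finset V) (d : V) :
    Fintype.card F * ∑ h : Module.Dual F V, ∑ v ∈ Q, (Q.filter (fun w => h w = h v + h d)).card
      = Fintype.card (Module.Dual F V) *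
        (Fintype.card F * (Q.filter (fun v => v + d ∈ Q)).card
          + (Q.card * Q.card - (Q.filter (fun v => v + d ∈ Q)).card)) := by
  have e1 : ∀ h : Module.Dual F V, ∑ v ∈ Q, (Q.filter (fun w => h w = h v + h d)).card
      = ((Q ×ˢ Q).filter (fun p => h (p.2 - (p.1 + d)) = 0)).card := by
    intro h
    rw [Finset.card_filter, Finset.sum_product]
    refine Finset.sum_congr rfl fun v _ => ?_
    rw [Finset.card_filter]
    refine Finset.sum_congr rfl fun w _ => ?_
    congr 1
    simp [sub_eq_zero]
  simp_rw [e1]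
  have hsw := Finset.sum_card_bipartiteAbove_eq_sum_card_bipartiteBelow
    (fun (h : Module.Dual F V) (p : V × V) => h (p.2 - (p.1 + d)) = 0)
    (s := univ) (t := Q ×ˢ Q)
  simp only [Finset.bipartiteAbove, Finset.bipartiteBelow] at hsw
  rw [hsw, ← Finset.sum_filter_add_sum_filter_not (Q ×ˢ Q) (fun p => p.2 = p.1 + d),
    mul_add, mul_add]
  have hN : ((Q ×ˢ Q).filter (fun p => p.2 = p.1 + d)).card =
      (Q.filter (fun v => v + d ∈ Q)).card := by
    symm
    apply Finset.card_bij (fun v _ => (v, v + d))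
    · intro v hv; simpa using hv
    · intro v _ w _ h; exact (Prod.ext_iff.1 h).1
    · rintro ⟨v, w⟩ hv
      simp only [mem_filter, mem_product] at hv
      exact ⟨v, by simp [hv.1.1, ← hv.2, hv.1.2], by simp [hv.2]⟩
  congr 1
  · rw [Finset.sum_congr rfl (g := fun _ => Fintype.card (Module.Dual F V))]
    · rw [sum_const, smul_eq_mul, hN]; ring
    · intro p hp
      rw [mem_filter] at hp
      rw [Finset.filter_true_of_mem, card_univ]
      intro h _
      rw [hp.2]; simp
  · rw [Finset.mul_sum, Finset.sum_congr rfl (g := fun _ => Fintype.card (Module.Dual F V))]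
    · rw [sum_const, smul_eq_mul]
      rw [← hN, ← Finset.card_product]
      rw [← Finset.card_filter_add_card_filter_not (s := Q ×ˢ Q) (fun p => p.2 = p.1 + d)]
      rw [Nat.add_sub_cancel_left]; ring
    · intro p hp
      rw [mem_filter] at hp
      have := aux_cardKer (F := F) (⊤ : Submodule F (Module.Dual F V))
        (Module.Dual.eval F V (p.2 - (p.1 + d))) (by
          have := Module.forall_dual_apply_eq_zero_iff F (p.2 - (p.1 + d))
          by_contra hcon
          push Not at hcon
          exact hp.2 (sub_eq_zero.1 (this.1 (fun f => by simpa using hcon f trivial))))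
      simpa using this

/-- the hypotheses on a cone `Q` of vectors -/
structure AuxH (F V : Type*) [Field F] [Fintype F] [AddCommGroup V] [Module F V]
    (n : ℕ) (Q : Finset V) : Prop where
  two_lt : 2 < Fintype.card F
  hn : 2 ≤ n
  fr : Module.finrank F V = 2 * n + 2
  zero : (0 : V) ∈ Q
  smul : ∀ (c : F), ∀ v ∈ Q, c • v ∈ Q
  line : ∀ u ∈ Q, ∀ v ∈ Q, u + v ∈ Q → ∀ a b : F, a • u + b • v ∈ Q
  cnt : ∀ h : V →ₗ[F] F, h ≠ 0 →
    (Q.filter (fun v => h v = 0)).card = Fintype.card F ^ (2 * n) ∨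
    (Q.filter (fun v => h v = 0)).card + Fintype.card F ^ n
      = Fintype.card F ^ (2 * n) + Fintype.card F ^ (n + 1)

lemma aux_G {F V : Type*} [Field F] [Fintype F] [AddCommGroup V] [Module F V]
    (Q : Finset V) (hsm : ∀ (c : F), ∀ v ∈ Q, c • v ∈ Q) (h : V →ₗ[F] F) (d : V)
    (q M x c : ℚ) (hq : q = Fintype.card F) (hM : M = Q.card)
    (hx : x = (Q.filter (fun v => h v = 0)).card) (hc : c = (M - x) / (q - 1)) :
    ((∑ v ∈ Q, (Q.filter (fun w => h w = h v + h d)).card : ℕ) : ℚ)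
      = (M + x - c) * c + (if h d = 0 then (x - c) ^ 2 else 0) := by
  have hq1 : 1 < Fintype.card F := Fintype.one_lt_card
  have hq1' : (1 : ℚ) < q := by rw [hq]; exact_mod_cast hq1
  have hy : ∀ t : F, ((Q.filter (fun w => h w = t)).card : ℚ)
      = c + (if t = 0 then x - c else 0) := by
    intro t
    split_ifs with ht
    · rw [ht, hx]; ring
    · have := aux_fibre Q hsm h t ht
      have h2 : ((Fintype.card F : ℚ) - 1) * ((Q.filter (fun w => h w = t)).card : ℚ)
          + ((Q.filter (fun w => h w = 0)).card : ℚ) = (Q.card : ℚ) := by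
        rw [← this]; push_cast [Nat.cast_sub hq1.le]; ring
      rw [← hq, ← hx, ← hM] at h2
      rw [hc, eq_comm, add_zero, div_eq_iff (by linarith)]
      linarith
  push_cast
  simp_rw [hy]
  rw [Finset.sum_add_distrib, sum_const, nsmul_eq_mul, ← hM]
  rw [← Finset.sum_filter, sum_const, nsmul_eq_mul]
  have e : (Q.filter (fun v => h v + h d = 0)) = Q.filter (fun v => h v = -h d) := by
    apply Finset.filter_congr
    intro v _
    exact add_eq_zero_iff_eq_neg
  rw [e, hy]
  simp only [neg_eq_zero]
  split_ifs <;> ring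

section
set_option linter.unusedSectionVars false
variable {F V : Type*} [Field F] [Fintype F] [AddCommGroup V] [Module F V] [Fintype V]
    [Fintype (Module.Dual F V)] {n : ℕ} {Q : Finset V}

lemma aux_cardDual (H : AuxH F V n Q) :
    Fintype.card (Module.Dual F V) = Fintype.card F ^ (2 * n + 2) := by
  rw [Module.card_eq_pow_finrank (K := F), Subspace.dual_finrank_eq, H.fr]

lemma AuxH.cntQ (H : AuxH F V n Q) (h : V →ₗ[F] F) (hh : h ≠ 0) :
    ((Q.filter (fun v => h v = 0)).card : ℚ) = ((Fintype.card F : ℚ) ^ n) ^ 2 ∨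
    ((Q.filter (fun v => h v = 0)).card : ℚ) = ((Fintype.card F : ℚ) ^ n) ^ 2
      + ((Fintype.card F : ℚ) - 1) * (Fintype.card F : ℚ) ^ n := by
  rcases H.cnt h hh with h1 | h1
  · left; rw [h1]; push_cast; ring
  · right
    have : (((Q.filter (fun v => h v = 0)).card + Fintype.card F ^ n : ℕ) : ℚ)
      = (Fintype.card F ^ (2 * n) + Fintype.card F ^ (n + 1) : ℕ) := by rw [h1]
    push_cast at this
    rw [pow_succ, mul_comm 2 n, pow_mul] at this
    linarith

lemma AuxH.sumAll (H : AuxH F V n Q) :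
    (∑ h : Module.Dual F V, ((Q.filter (fun v => h v = 0)).card : ℚ)) * Fintype.card F
      = (Fintype.card F : ℚ) ^ (2 * n + 2) * (Q.card + (Fintype.card F : ℚ) - 1) := by
  have := aux_sumx Q (⊥ : Submodule F V)
  simp only [Submodule.dualAnnihilator_bot, Submodule.mem_top, Submodule.mem_bot,
    Finset.filter_true, card_univ, aux_cardDual H] at this
  have e1 : (Q.filter (fun v => v = 0)).card = 1 := by
    rw [Finset.card_eq_one]
    refine ⟨0, ?_⟩
    ext v
    simp only [mem_filter, mem_singleton]
    exact ⟨fun h => h.2, fun h => ⟨h ▸ H.zero, h⟩⟩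
  have e2 := Finset.card_filter_add_card_filter_not (s := Q) (fun v => v = 0)
  rw [e1] at e2 this
  have e3 : ((Q.filter (fun v => ¬ v = 0)).card : ℚ) = Q.card - 1 := by
    rw [← e2]; push_cast; ring
  have := congrArg (Nat.cast (R := ℚ)) this
  push_cast at this
  rw [e3] at this
  linarith

lemma aux_root (q Y M : ℚ) (hY : 1 < Y)
    (h : Y ^ 2 * M * (M + q ^ 2 - 1) - (2 * Y ^ 2 + (q - 1) * Y) * (q * Y ^ 2 * (M + q - 1))
      + Y ^ 2 * (Y ^ 2 + (q - 1) * Y) * (q ^ 2 * Y ^ 2) = (M - Y ^ 2) * (M - (Y ^ 2 + (q - 1) * Y))) :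
    M = q * Y ^ 2 + (q - 1) * Y ∨
      (Y + 1) * (q ^ 2 * Y ^ 2 - M) = (q - 1) * Y ^ 2 * (q * Y + 1) := by
  have : (Y - 1) * ((M - (q * Y ^ 2 + (q - 1) * Y)) *
    ((Y + 1) * (q ^ 2 * Y ^ 2 - M) - (q - 1) * Y ^ 2 * (q * Y + 1))) = 0 := by
    linear_combination -h
  rcases mul_eq_zero.1 this with h | h
  · linarith
  rcases mul_eq_zero.1 h with h | h
  · left; linarith
  · right; linarith

lemma AuxH.corrQ (H : AuxH F V n Q) (d : V) (q M : ℚ) (x c : Module.Dual F V → ℚ)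
    (hq : q = Fintype.card F) (hM : M = Q.card)
    (hx : ∀ h, x h = (Q.filter (fun v => h v = 0)).card) (hc : ∀ h, c h = (M - x h) / (q - 1)) :
    q * ∑ h : Module.Dual F V, ((M + x h - c h) * c h + (if h d = 0 then (x h - c h) ^ 2 else 0))
      = q ^ (2 * n + 2) * (M ^ 2 + (q - 1) * ((Q.filter (fun v => v + d ∈ Q)).card : ℚ)) := by
  have h1 := aux_corr (F := F) Q d
  rw [aux_cardDual H] at h1
  have hle : (Q.filter (fun v => v + d ∈ Q)).card ≤ Q.card * Q.card :=
    (card_filter_le _ _).trans (Nat.le_mul_self _)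
  have h2 := congrArg (Nat.cast (R := ℚ)) h1
  rw [Nat.cast_mul, Nat.cast_sum, Finset.sum_congr rfl
    (fun h _ => aux_G Q H.smul h d q M (x h) (c h) hq hM (hx h) (hc h))] at h2
  push_cast [Nat.cast_sub hle] at h2
  rw [← hq, ← hM] at h2
  rw [h2]; ring

lemma AuxH.one_lt (H : AuxH F V n Q) : (1 : ℚ) < (Fintype.card F : ℚ) ^ n := by
  have : 1 < Fintype.card F ^ n := Nat.one_lt_pow (by have := H.hn; omega) (by have := H.two_lt; omega)
  exact_mod_cast this

/-- the size of `Q` -/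
lemma AuxH.cardQ (H : AuxH F V n Q) :
    (Q.card : ℚ) = (Fintype.card F : ℚ) * ((Fintype.card F : ℚ) ^ n) ^ 2
      + ((Fintype.card F : ℚ) - 1) * (Fintype.card F : ℚ) ^ n := by
  obtain ⟨q, hq⟩ : ∃ q : ℚ, q = Fintype.card F := ⟨_, rfl⟩
  obtain ⟨Y, hY⟩ : ∃ Y : ℚ, Y = q ^ n := ⟨_, rfl⟩
  obtain ⟨M, hM⟩ : ∃ M : ℚ, M = Q.card := ⟨_, rfl⟩
  obtain ⟨x, hx⟩ : ∃ x : Module.Dual F V → ℚ, ∀ h, x h = (Q.filter (fun v => h v = 0)).card :=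
    ⟨_, fun _ => rfl⟩
  have hq2 : 2 < q := by rw [hq]; exact_mod_cast H.two_lt
  have hY1 : 1 < Y := by rw [hY, hq]; exact H.one_lt
  have hqm : q ^ (2 * n + 2) = q ^ 2 * Y ^ 2 := by rw [hY]; ring
  have hcorr := H.corrQ 0 q M x (fun h => (M - x h) / (q - 1)) hq hM hx (fun _ => rfl)
  have hsum := H.sumAll
  simp only [← hx] at hsum
  rw [← hq, ← hM, hqm] at hsum
  simp only [map_zero, if_true, add_zero, Finset.filter_mem_eq_inter, Finset.inter_self] at hcorr
  rw [← hM, hqm] at hcorr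
  have hcard : (∑ h : Module.Dual F V, (1 : ℚ)) = q ^ 2 * Y ^ 2 := by
    rw [sum_const, card_univ, aux_cardDual H, ← hqm, hq]; simp
  have hx0 : x 0 = M := by rw [hx, hM]; simp
  have hvan : ∑ h : Module.Dual F V, (x h - Y ^ 2) * (x h - (Y ^ 2 + (q - 1) * Y))
      = (M - Y ^ 2) * (M - (Y ^ 2 + (q - 1) * Y)) := by
    rw [Finset.sum_eq_single (0 : Module.Dual F V)]
    · rw [hx0]
    · intro h _ hh
      rcases H.cntQ h hh with h1 | h1
      · rw [hx, h1, hY, hq]; ring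
      · rw [hx, h1, hY, hq]; ring
    · simp
  have hq1 : q - 1 ≠ 0 := by linarith
  have hq0 : q ≠ 0 := by linarith
  -- sums
  obtain ⟨s2, hs2⟩ : ∃ s2 : ℚ, s2 = ∑ h : Module.Dual F V, x h ^ 2 := ⟨_, rfl⟩
  obtain ⟨s1, hs1⟩ : ∃ s1 : ℚ, s1 = ∑ h : Module.Dual F V, x h := ⟨_, rfl⟩
  have e1 : ∑ h : Module.Dual F V, (x h - Y ^ 2) * (x h - (Y ^ 2 + (q - 1) * Y))
      = s2 - (2 * Y ^ 2 + (q - 1) * Y) * s1 + Y ^ 2 * (Y ^ 2 + (q - 1) * Y) * (q ^ 2 * Y ^ 2) := by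
    rw [hs1, hs2, ← hcard, Finset.mul_sum, Finset.mul_sum, ← Finset.sum_sub_distrib,
      ← Finset.sum_add_distrib]
    exact Finset.sum_congr rfl fun h _ => by ring
  have e2 : ∑ h : Module.Dual F V, ((M + x h - (M - x h) / (q - 1)) * ((M - x h) / (q - 1))
      + (x h - (M - x h) / (q - 1)) ^ 2)
      = (q * s2 - 2 * M * s1 + M ^ 2 * (q ^ 2 * Y ^ 2)) / (q - 1) := by
    rw [hs1, hs2, ← hcard, Finset.mul_sum, Finset.mul_sum, Finset.mul_sum,
      ← Finset.sum_sub_distrib, ← Finset.sum_add_distrib, Finset.sum_div]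
    exact Finset.sum_congr rfl fun h _ => by field_simp; ring
  rw [e2] at hcorr
  rw [e1] at hvan
  rw [← hs1] at hsum
  have hs1' : s1 = q * Y ^ 2 * (M + q - 1) := by
    apply mul_right_cancel₀ hq0; rw [hsum]; ring
  have hs2' : s2 = Y ^ 2 * M * (M + q ^ 2 - 1) := by
    have : q * (q * s2 - 2 * M * s1 + M ^ 2 * (q ^ 2 * Y ^ 2)) =
      (q - 1) * (q ^ 2 * Y ^ 2 * (M ^ 2 + (q - 1) * M)) := by
      rw [← hcorr]; field_simp
    rw [hs1'] at this
    apply mul_left_cancel₀ (pow_ne_zero 2 hq0)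
    linear_combination this
  rw [hs1', hs2'] at hvan
  rw [← hM, ← hq, ← hY]
  rcases aux_root q Y M hY1 hvan with h | h
  · exact h
  exfalso
  -- integrality
  have hdvd : ((Fintype.card F : ℤ) ^ n + 1) ∣ ((Fintype.card F : ℤ) - 1) ^ 2 := by
    have hz : ((Fintype.card F : ℤ) ^ n + 1) *
        ((Fintype.card F : ℤ) ^ 2 * ((Fintype.card F : ℤ) ^ n) ^ 2 - (Q.card : ℤ)) =
        ((Fintype.card F : ℤ) - 1) * ((Fintype.card F : ℤ) ^ n) ^ 2 *
          ((Fintype.card F : ℤ) * (Fintype.card F : ℤ) ^ n + 1) := by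
      rw [hY, hM, hq] at h
      exact_mod_cast h
    generalize (Fintype.card F : ℤ) ^ n = Z at hz ⊢
    generalize (Fintype.card F : ℤ) = p at hz ⊢
    generalize (Q.card : ℤ) = m at hz ⊢
    refine ⟨(p - 1) * ((Z - 1) * (p * Z + 1) + p) - (p ^ 2 * Z ^ 2 - m), ?_⟩
    linear_combination hz
  have hle := Int.le_of_dvd (by
    have := H.two_lt
    have : (2 : ℤ) < Fintype.card F := by exact_mod_cast this
    nlinarith) hdvd
  have h3 : (Fintype.card F) ^ 2 ≤ (Fintype.card F) ^ n := Nat.pow_le_pow_right (by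
    have := H.two_lt; omega) H.hn
  have h4 : (Fintype.card F : ℤ) ^ 2 ≤ (Fintype.card F : ℤ) ^ n := by exact_mod_cast h3
  have := H.two_lt
  have : (2 : ℤ) < Fintype.card F := by exact_mod_cast this
  nlinarith

/-- number of points joined to `d` -/
lemma AuxH.cardN (H : AuxH F V n Q) (d : V) (hd : d ∈ Q) (hd0 : d ≠ 0) :
    ((Q.filter (fun v => v + d ∈ Q)).card : ℚ) = ((Fintype.card F : ℚ) ^ n) ^ 2
      + ((Fintype.card F : ℚ) - 1) * (Fintype.card F : ℚ) ^ n := by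
  have hMc := H.cardQ
  obtain ⟨q, hq⟩ : ∃ q : ℚ, q = Fintype.card F := ⟨_, rfl⟩
  obtain ⟨Y, hY⟩ : ∃ Y : ℚ, Y = q ^ n := ⟨_, rfl⟩
  obtain ⟨M, hM⟩ : ∃ M : ℚ, M = Q.card := ⟨_, rfl⟩
  obtain ⟨N, hN⟩ : ∃ N : ℚ, N = (Q.filter (fun v => v + d ∈ Q)).card := ⟨_, rfl⟩
  obtain ⟨x, hx⟩ : ∃ x : Module.Dual F V → ℚ, ∀ h, x h = (Q.filter (fun v => h v = 0)).card :=
    ⟨_, fun _ => rfl⟩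
  have hq2 : 2 < q := by rw [hq]; exact_mod_cast H.two_lt
  have hY1 : 1 < Y := by rw [hY, hq]; exact H.one_lt
  have hqm : q ^ (2 * n + 2) = q ^ 2 * Y ^ 2 := by rw [hY]; ring
  have hcorr := H.corrQ 0 q M x (fun h => (M - x h) / (q - 1)) hq hM hx (fun _ => rfl)
  have hcorrd := H.corrQ d q M x (fun h => (M - x h) / (q - 1)) hq hM hx (fun _ => rfl)
  have hsum := H.sumAll
  simp only [← hx] at hsum
  rw [← hq, ← hM, hqm] at hsum
  simp only [map_zero, if_true, add_zero, Finset.filter_mem_eq_inter, Finset.inter_self] at hcorr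
  rw [← hM, hqm] at hcorr
  rw [← hN, hqm] at hcorrd
  rw [← hM, ← hq, ← hY] at hMc
  rw [← hN, ← hq, ← hY]
  have hq1 : q - 1 ≠ 0 := by linarith
  have hq0 : q ≠ 0 := by linarith
  have hY0 : Y ≠ 0 := by linarith
  have hdiff : q * ∑ h ∈ univ.filter (fun h : Module.Dual F V => ¬ h d = 0),
      (x h - (M - x h) / (q - 1)) ^ 2 = q ^ 2 * Y ^ 2 * ((q - 1) * (M - N)) := by
    have e : ∑ h ∈ univ.filter (fun h : Module.Dual F V => ¬ h d = 0),
        (x h - (M - x h) / (q - 1)) ^ 2 =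
        ∑ h : Module.Dual F V, ((M + x h - (M - x h) / (q - 1)) * ((M - x h) / (q - 1))
          + (x h - (M - x h) / (q - 1)) ^ 2) -
        ∑ h : Module.Dual F V, ((M + x h - (M - x h) / (q - 1)) * ((M - x h) / (q - 1))
          + if h d = 0 then (x h - (M - x h) / (q - 1)) ^ 2 else 0) := by
      rw [← Finset.sum_sub_distrib, Finset.sum_filter]
      refine Finset.sum_congr rfl fun h _ => ?_
      by_cases hh : h d = 0 <;> simp [hh]
    rw [e, mul_sub, hcorr, hcorrd]; ring
  -- sum over annihilator of d
  have hann : ∀ h : Module.Dual F V, h ∈ (F ∙ d).dualAnnihilator ↔ h d = 0 := by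
    intro h
    rw [Submodule.mem_dualAnnihilator]
    constructor
    · intro hh; exact hh d (Submodule.mem_span_singleton_self d)
    · intro hh w hw
      obtain ⟨a, rfl⟩ := Submodule.mem_span_singleton.1 hw
      simp [hh]
  have hs := aux_sumx Q (F ∙ d)
  have hca : (univ.filter (fun h : Module.Dual F V => h ∈ (F ∙ d).dualAnnihilator)).card
      = Fintype.card F ^ (2 * n + 1) := by
    rw [aux_cardSub]
    congr 1
    have := Subspace.finrank_add_finrank_dualAnnihilator_eq (F ∙ d)
    rw [finrank_span_singleton hd0, H.fr] at this
    omega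
  have hcQ : (Q.filter (fun v => v ∈ F ∙ d)).card = Fintype.card F := by
    have : (Q.filter (fun v => v ∈ F ∙ d)) = univ.filter (fun v => v ∈ F ∙ d) := by
      ext v
      simp only [mem_filter, mem_univ, true_and, and_iff_right_iff_imp]
      intro hv
      obtain ⟨a, rfl⟩ := Submodule.mem_span_singleton.1 hv
      exact H.smul _ _ hd
    rw [this, aux_cardSub, finrank_span_singleton hd0, pow_one]
  have hcQ' := Finset.card_filter_add_card_filter_not (s := Q) (fun v => v ∈ F ∙ d)
  rw [hcQ] at hcQ'
  have hcQ2 : ((Q.filter (fun v => v ∉ F ∙ d)).card : ℚ) = M - q := by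
    rw [hM, hq, ← hcQ']; push_cast; ring
  have hs' := congrArg (Nat.cast (R := ℚ)) hs
  rw [hca, hcQ] at hs'
  push_cast at hs'
  rw [hcQ2] at hs'
  simp only [← hx, hann] at hs'
  rw [← hq] at hs'
  have hqm1 : q ^ (2 * n + 1) = q * Y ^ 2 := by rw [hY]; ring
  rw [hqm1] at hs'
  simp only [hann] at hca
  have hcard : (∑ h ∈ univ.filter (fun h : Module.Dual F V => ¬ h d = 0), (1 : ℚ))
      = q ^ 2 * Y ^ 2 - q * Y ^ 2 := by
    have := Finset.card_filter_add_card_filter_not (s := (univ : Finset (Module.Dual F V)))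
      (fun h => h d = 0)
    rw [hca, card_univ, aux_cardDual H] at this
    have := congrArg (Nat.cast (R := ℚ)) this
    push_cast at this
    rw [← hq, hqm, hqm1] at this
    rw [sum_const, nsmul_eq_mul, mul_one]
    linarith
  have hsn := Finset.sum_filter_add_sum_filter_not (univ : Finset (Module.Dual F V))
    (fun h => h d = 0) (fun h => x h)
  obtain ⟨s, hsdef⟩ : ∃ s : ℚ, s = ∑ h ∈ univ.filter (fun h : Module.Dual F V => ¬ h d = 0), x h :=
    ⟨_, rfl⟩
  have e3 : ∑ h ∈ univ.filter (fun h : Module.Dual F V => ¬ h d = 0),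
      (x h - (M - x h) / (q - 1)) ^ 2 =
      Y ^ 2 * (q ^ 2 * Y ^ 2 - q * Y ^ 2) + Y ^ 2 * (q ^ 2 - 2 * q) *
        ((s - Y ^ 2 * (q ^ 2 * Y ^ 2 - q * Y ^ 2)) / ((q - 1) * Y)) := by
    rw [hsdef, ← hcard, Finset.mul_sum, ← Finset.sum_sub_distrib, Finset.sum_div, Finset.mul_sum,
      ← Finset.sum_add_distrib]
    refine Finset.sum_congr rfl fun h hh => ?_
    have hh0 : h ≠ 0 := by
      rintro rfl
      simp at hh
    rcases H.cntQ h hh0 with h1 | h1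
    · rw [← hx, ← hq, ← hY] at h1
      rw [h1, hMc]; field_simp; ring
    · rw [← hx, ← hq, ← hY] at h1
      rw [h1, hMc]; field_simp; ring
  rw [e3] at hdiff
  rw [← hsdef] at hsn
  have hsv : q ^ 2 * s = q ^ 2 * Y ^ 2 * ((q - 1) * M) := by
    rw [← hsn] at hsum
    linear_combination q * hsum - q * hs'
  have hsv' : s = Y ^ 2 * (q - 1) * M := by
    apply mul_left_cancel₀ (pow_ne_zero 2 hq0); rw [hsv]; ring
  rw [hsv', hMc] at hdiff
  rw [← hMc] at hdiff
  have e4 : (Y ^ 2 * (q - 1) * (q * Y ^ 2 + (q - 1) * Y) - Y ^ 2 * (q ^ 2 * Y ^ 2 - q * Y ^ 2)) /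
      ((q - 1) * Y) = Y ^ 2 * (q - 1) := by
    field_simp; ring
  rw [← hMc] at e4
  rw [e4] at hdiff
  have h5 : q ^ 2 * Y ^ 2 * (q - 1) * N = q ^ 2 * Y ^ 2 * (q - 1) * (Y ^ 2 + (q - 1) * Y) := by
    have : q ^ 2 * Y ^ 2 * (q - 1) * N = q ^ 2 * Y ^ 2 * (q - 1) * M -
      q ^ 2 * Y ^ 2 * ((q - 1) * (M - N)) := by ring
    rw [this, ← hdiff, hMc]; ring
  exact mul_left_cancel₀ (by positivity) h5

lemma AuxH.exists_ne (H : AuxH F V n Q) : ∃ a : F, a ≠ 0 ∧ a ≠ 1 := by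
  obtain ⟨a, ha⟩ := Finset.exists_mem_notMem_of_card_lt_card
    (s := ({0, 1} : Finset F)) (t := univ) (by
      rw [card_univ]; exact lt_of_le_of_lt Finset.card_le_two H.two_lt)
  refine ⟨a, ?_, ?_⟩ <;> rintro rfl <;> simp at ha

lemma AuxH.perp_smul (H : AuxH F V n Q) {y c : V} (hy : y ∈ Q) (hc : c ∈ Q) (h : y + c ∈ Q) (a : F) :
    y + a • c ∈ Q := by
  simpa using H.line y hy c hc h 1 a

lemma AuxH.perp_add (H : AuxH F V n Q) {y c c' : V} (hy : y ∈ Q) (hc : c ∈ Q) (hc' : c' ∈ Q)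
    (hcc : c + c' ∈ Q) (h : y + c ∈ Q) (h' : y + c' ∈ Q) : y + (c + c') ∈ Q := by
  obtain ⟨a, ha0, ha1⟩ := H.exists_ne
  have ha2 : 1 - a ≠ 0 := sub_ne_zero.2 (Ne.symm ha1)
  have h1 : a • y + (1 : F) • c ∈ Q := H.line y hy c hc h a 1
  have h2 : (-a) • y + (-a / (1 - a)) • c' ∈ Q := H.line y hy c' hc' h' _ _
  have h3 : (a • y + (1 : F) • c) + ((-a) • y + (-a / (1 - a)) • c') ∈ Q := by
    have := H.line c hc c' hc' hcc 1 (-a / (1 - a))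
    have e : (a • y + (1 : F) • c) + ((-a) • y + (-a / (1 - a)) • c')
      = (1 : F) • c + (-a / (1 - a)) • c' := by module
    rw [e]; exact this
  have h4 := H.line _ h1 _ h2 h3 1 (-(1 - a) / a)
  have e : (1 : F) • (a • y + (1 : F) • c) + (-(1 - a) / a) • ((-a) • y + (-a / (1 - a)) • c')
      = y + (c + c') := by
    have e1 : (-(1 - a) / a) * (-a) = 1 - a := by field_simp
    have e2 : (-(1 - a) / a) * (-a / (1 - a)) = 1 := by field_simp
    rw [smul_add, smul_add, smul_smul (-(1 - a) / a), smul_smul (-(1 - a) / a), e1, e2]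
    module
  rw [e] at h4
  exact h4

/-- vectors of `C` joined to `y` -/
def AuxH.perp (H : AuxH F V n Q) (C : Submodule F V) (hC : ∀ c ∈ C, c ∈ Q) (y : V) (hy : y ∈ Q) :
    Submodule F V where
  carrier := {c | c ∈ C ∧ y + c ∈ Q}
  zero_mem' := ⟨C.zero_mem, by simpa using hy⟩
  add_mem' := by
    rintro a b ⟨ha, ha'⟩ ⟨hb, hb'⟩
    exact ⟨C.add_mem ha hb, H.perp_add hy (hC a ha) (hC b hb) (hC _ (C.add_mem ha hb)) ha' hb'⟩
  smul_mem' := by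
    rintro a c ⟨hc, hc'⟩
    exact ⟨C.smul_mem a hc, H.perp_smul hy (hC c hc) hc' a⟩

lemma AuxH.mem_perp (H : AuxH F V n Q) (C : Submodule F V) (hC : ∀ c ∈ C, c ∈ Q) (y : V)
    (hy : y ∈ Q) (c : V) : c ∈ H.perp C hC y hy ↔ c ∈ C ∧ y + c ∈ Q := Iff.rfl

lemma AuxH.sup_sub (H : AuxH F V n Q) (C : Submodule F V) (hC : ∀ c ∈ C, c ∈ Q) (y : V)
    (hy : y ∈ Q) (hfull : ∀ c ∈ C, y + c ∈ Q) : ∀ v ∈ C ⊔ (F ∙ y), v ∈ Q := by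
  intro v hv
  obtain ⟨c, hc, z, hz, rfl⟩ := Submodule.mem_sup.1 hv
  obtain ⟨a, rfl⟩ := Submodule.mem_span_singleton.1 hz
  have := H.line y hy c (hC c hc) (hfull c hc) a 1
  rw [add_comm]; simpa using this

lemma aux_finrank_sup (C : Submodule F V) (y : V) (hy : y ∉ C) :
    Module.finrank F ↥(C ⊔ (F ∙ y)) = Module.finrank F C + 1 := by
  have h := Submodule.finrank_sup_add_finrank_inf_eq C (F ∙ y)
  have hy0 : y ≠ 0 := fun h => hy (h ▸ C.zero_mem)
  have hinf : C ⊓ (F ∙ y) = ⊥ := by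
    rw [← disjoint_iff, Submodule.disjoint_span_singleton' hy0]
    exact hy
  rw [hinf, finrank_span_singleton hy0, finrank_bot] at h
  omega

/-- double counting of joined pairs -/
lemma AuxH.sum_perp (H : AuxH F V n Q) (C : Submodule F V) (hC : ∀ c ∈ C, c ∈ Q) (q Y Z : ℚ)
    (hq : q = Fintype.card F) (hY : Y = q ^ n) (hZ : Z = q ^ Module.finrank F C) :
    ∑ y ∈ Q.filter (fun y => y ∉ C), ((univ.filter (fun c => c ∈ C ∧ y + c ∈ Q)).card : ℚ)
      = (q * Y ^ 2 + (q - 1) * Y) + (Z - 1) * (Y ^ 2 + (q - 1) * Y) - Z ^ 2 := by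
  have hsw := Finset.sum_card_bipartiteAbove_eq_sum_card_bipartiteBelow
    (fun (y c : V) => y + c ∈ Q) (s := Q) (t := univ.filter (fun c => c ∈ C))
  simp only [Finset.bipartiteAbove, Finset.bipartiteBelow, Finset.filter_filter] at hsw
  have hZc : ((univ.filter (fun c => c ∈ C)).card : ℚ) = Z := by
    rw [aux_cardSub, hZ, hq]; simp
  have h1 : ((∑ c ∈ univ.filter (fun c => c ∈ C), (Q.filter (fun y => y + c ∈ Q)).card : ℕ) : ℚ)
      = (q * Y ^ 2 + (q - 1) * Y) + (Z - 1) * (Y ^ 2 + (q - 1) * Y) := by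
    have h0 : (0 : V) ∈ univ.filter (fun c => c ∈ C) := by simp
    rw [← Finset.sum_erase_add _ _ h0]
    push_cast
    rw [Finset.sum_congr rfl (g := fun _ => (Y ^ 2 + (q - 1) * Y))]
    · rw [sum_const, nsmul_eq_mul, card_erase_of_mem h0, Nat.cast_sub (card_pos.2 ⟨0, h0⟩), hZc]
      have : ((Q.filter (fun y => y + 0 ∈ Q)).card : ℚ) = q * Y ^ 2 + (q - 1) * Y := by
        simp only [add_zero, Finset.filter_mem_eq_inter, Finset.inter_self]
        rw [H.cardQ, hY, hq]
      rw [this]; push_cast; ring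
    · intro c hc
      simp only [mem_erase, mem_filter, mem_univ, true_and] at hc
      rw [H.cardN c (hC c hc.2) hc.1, hY, hq]
  rw [← hsw, ← Finset.sum_filter_add_sum_filter_not Q (fun y => y ∈ C)] at h1
  push_cast at h1
  have h2 : ∑ y ∈ Q.filter (fun y => y ∈ C),
      ((univ.filter (fun c => c ∈ C ∧ y + c ∈ Q)).card : ℚ) = Z ^ 2 := by
    rw [Finset.sum_congr rfl (g := fun _ => Z)]
    · have : (Q.filter (fun y => y ∈ C)) = univ.filter (fun y => y ∈ C) := by
        ext v
        simp only [mem_filter, mem_univ, true_and, and_iff_right_iff_imp]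
        exact hC v
      rw [sum_const, nsmul_eq_mul, this, hZc]; ring
    · intro y hy
      rw [mem_filter] at hy
      rw [← hZc]
      congr 2
      ext c
      simp only [mem_filter, mem_univ, true_and, and_iff_left_iff_imp]
      intro hc
      exact hC _ (C.add_mem hy.2 hc)
  linarith

lemma AuxH.card_notin (H : AuxH F V n Q) (C : Submodule F V) (hC : ∀ c ∈ C, c ∈ Q) (q Y Z : ℚ)
    (hq : q = Fintype.card F) (hY : Y = q ^ n) (hZ : Z = q ^ Module.finrank F C) :
    ((Q.filter (fun y => y ∉ C)).card : ℚ) = q * Y ^ 2 + (q - 1) * Y - Z := by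
  have h := Finset.card_filter_add_card_filter_not (s := Q) (fun v => v ∈ C)
  have : (Q.filter (fun y => y ∈ C)) = univ.filter (fun y => y ∈ C) := by
    ext v
    simp only [mem_filter, mem_univ, true_and, and_iff_right_iff_imp]
    exact hC v
  rw [this, aux_cardSub] at h
  have := congrArg (Nat.cast (R := ℚ)) h
  push_cast at this
  rw [H.cardQ, ← hq, ← hY, ← hZ] at this
  linarith

lemma AuxH.perp_le (H : AuxH F V n Q) (C : Submodule F V) (hC : ∀ c ∈ C, c ∈ Q) (q Z : ℚ)
    (hq : q = Fintype.card F) (hZ : Z = q ^ Module.finrank F C) (y : V) (hy : y ∈ Q)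
    (hnf : ¬ ∀ c ∈ C, y + c ∈ Q) :
    q * ((univ.filter (fun c => c ∈ C ∧ y + c ∈ Q)).card : ℚ) ≤ Z := by
  have h1 : (univ.filter (fun c => c ∈ C ∧ y + c ∈ Q)).card
      = Fintype.card F ^ Module.finrank F (H.perp C hC y hy) := by
    rw [← aux_cardSub]; congr 1; ext c; simp [H.mem_perp]
  have hlt : H.perp C hC y hy < C := by
    refine lt_of_le_of_ne (fun c hc => hc.1) fun h => hnf fun c hc => ?_
    rw [← h] at hc
    exact hc.2
  have h2 := Submodule.finrank_lt_finrank_of_lt hlt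
  have h3 : Fintype.card F ^ (Module.finrank F (H.perp C hC y hy) + 1)
      ≤ Fintype.card F ^ Module.finrank F C :=
    Nat.pow_le_pow_right (by have := H.two_lt; omega) h2
  rw [h1, hZ, hq]
  rw [pow_succ, mul_comm] at h3
  exact_mod_cast h3

lemma AuxH.extend (H : AuxH F V n Q) (C : Submodule F V) (hC : ∀ c ∈ C, c ∈ Q)
    (hu : Module.finrank F C ≤ n) :
    ∃ C' : Submodule F V, (∀ c ∈ C', c ∈ Q) ∧ Module.finrank F C' = Module.finrank F C + 1 := by
  by_contra hcon
  have hnf : ∀ y ∈ Q, y ∉ C → ¬ ∀ c ∈ C, y + c ∈ Q := by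
    intro y hy hyC hf
    exact hcon ⟨_, H.sup_sub C hC y hy hf, aux_finrank_sup C y hyC⟩
  obtain ⟨q, hq⟩ : ∃ q : ℚ, q = Fintype.card F := ⟨_, rfl⟩
  obtain ⟨Y, hY⟩ : ∃ Y : ℚ, Y = q ^ n := ⟨_, rfl⟩
  obtain ⟨Z, hZ⟩ : ∃ Z : ℚ, Z = q ^ Module.finrank F C := ⟨_, rfl⟩
  have hq2 : 2 < q := by rw [hq]; exact_mod_cast H.two_lt
  have hY1 : 1 < Y := by rw [hY, hq]; exact H.one_lt
  have hZ0 : 0 < Z := by rw [hZ]; positivity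
  have hZY : Z ≤ Y := by rw [hZ, hY]; exact pow_le_pow_right₀ (by linarith) hu
  have h1 := H.sum_perp C hC q Y Z hq hY hZ
  have h2 : q * ∑ y ∈ Q.filter (fun y => y ∉ C),
      ((univ.filter (fun c => c ∈ C ∧ y + c ∈ Q)).card : ℚ)
      ≤ (q * Y ^ 2 + (q - 1) * Y - Z) * Z := by
    rw [← H.card_notin C hC q Y Z hq hY hZ, Finset.mul_sum, ← nsmul_eq_mul]
    apply Finset.sum_le_card_nsmul
    intro y hy
    rw [mem_filter] at hy
    exact H.perp_le C hC q Z hq hZ y hy.1 (hnf y hy.1 hy.2)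
  rw [h1] at h2
  have h3 : (q - 1) * (q * Y ^ 2 + (q - 1) * Y * Z - Z ^ 2) ≤ 0 := by linarith
  have h4 : 0 < q * Y ^ 2 + (q - 1) * Y * Z - Z ^ 2 := by
    have : Z ^ 2 ≤ Y * Z := by nlinarith
    have : 0 < Y * Z := by positivity
    nlinarith [sq_nonneg Y]
  nlinarith

lemma AuxH.exists_gen (H : AuxH F V n Q) : ∀ u ≤ n + 1, ∃ C : Submodule F V, (∀ c ∈ C, c ∈ Q) ∧
    Module.finrank F C = u := by
  intro u
  induction u with
  | zero =>
    intro _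
    exact ⟨⊥, fun c hc => by rw [(Submodule.mem_bot F).1 hc]; exact H.zero, finrank_bot F V⟩
  | succ k ih =>
    intro hk
    obtain ⟨C, hC, hf⟩ := ih (by omega)
    obtain ⟨C', hC', hf'⟩ := H.extend C hC (by omega)
    exact ⟨C', hC', by omega⟩

/-- no totally singular subspace of dimension `n+2` -/
lemma AuxH.no_big (H : AuxH F V n Q) (U : Submodule F V) (hU : ∀ c ∈ U, c ∈ Q)
    (hf : Module.finrank F U = n + 2) : False := by
  obtain ⟨q, hq⟩ : ∃ q : ℚ, q = Fintype.card F := ⟨_, rfl⟩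
  obtain ⟨Y, hY⟩ : ∃ Y : ℚ, Y = q ^ n := ⟨_, rfl⟩
  have hq2 : 2 < q := by rw [hq]; exact_mod_cast H.two_lt
  have hY1 : 1 < Y := by rw [hY, hq]; exact H.one_lt
  have hs := aux_sumx Q U
  have hca : (univ.filter (fun h : Module.Dual F V => h ∈ U.dualAnnihilator)).card
      = Fintype.card F ^ n := by
    rw [aux_cardSub]
    congr 1
    have := Subspace.finrank_add_finrank_dualAnnihilator_eq U
    rw [hf, H.fr] at this
    omega
  have h0 : (0 : Module.Dual F V) ∈
    univ.filter (fun h : Module.Dual F V => h ∈ U.dualAnnihilator) := by simp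
  have hcn := H.card_notin U hU q Y (q ^ 2 * Y) hq hY (by rw [hf, hY]; ring)
  have hci : ((Q.filter (fun y => y ∈ U)).card : ℚ) = q ^ 2 * Y := by
    have : (Q.filter (fun y => y ∈ U)) = univ.filter (fun y => y ∈ U) := by
      ext v
      simp only [mem_filter, mem_univ, true_and, and_iff_right_iff_imp]
      exact hU v
    rw [this, aux_cardSub, hf, hY, hq]; push_cast; ring
  have hs' := congrArg (Nat.cast (R := ℚ)) hs
  rw [hca, ← Finset.sum_erase_add _ _ h0] at hs'
  push_cast at hs'
  rw [hcn, hci, ← hq, ← hY] at hs'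
  have hle : ∑ h ∈ (univ.filter (fun h : Module.Dual F V => h ∈ U.dualAnnihilator)).erase 0,
      ((Q.filter (fun v => h v = 0)).card : ℚ) ≤ (Y - 1) * (Y ^ 2 + (q - 1) * Y) := by
    have : (((univ.filter (fun h : Module.Dual F V => h ∈ U.dualAnnihilator)).erase 0).card : ℚ)
      = Y - 1 := by
      rw [card_erase_of_mem h0, Nat.cast_sub (card_pos.2 ⟨0, h0⟩), hca, hY, hq]; simp
    rw [← this, ← nsmul_eq_mul]
    apply Finset.sum_le_card_nsmul
    intro h hh
    rw [mem_erase] at hh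
    have hp : 0 < (q - 1) * Y := by nlinarith
    rcases H.cntQ h hh.1 with h1 | h1 <;> rw [← hq, ← hY] at h1 <;> rw [h1]
    linarith
  have hM : ((Q.filter (fun v => (0 : Module.Dual F V) v = 0)).card : ℚ)
      = q * Y ^ 2 + (q - 1) * Y := by
    simp only [LinearMap.zero_apply, Finset.filter_true]
    rw [H.cardQ, hY, hq]
  rw [hM] at hs'
  have h5 := mul_le_mul_of_nonneg_left hle (by linarith : (0 : ℚ) ≤ q)
  have h6 : Y ^ 2 * (q - 1) ^ 3 ≤ 0 := by linarith
  have h7 : 0 < Y ^ 2 * (q - 1) ^ 3 := by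
    have : 0 < q - 1 := by linarith
    positivity
  linarith

/-- generators: perps are hyperplanes -/
lemma AuxH.perp_card (H : AuxH F V n Q) (A : Submodule F V) (hA : ∀ c ∈ A, c ∈ Q)
    (hf : Module.finrank F A = n + 1) (y : V) (hy : y ∈ Q) (hyA : y ∉ A) :
    Module.finrank F (H.perp A hA y hy) = n := by
  have hnf : ∀ y ∈ Q, y ∉ A → ¬ ∀ c ∈ A, y + c ∈ Q := by
    intro y hy hyC hf'
    exact H.no_big _ (H.sup_sub A hA y hy hf') (by rw [aux_finrank_sup A y hyC, hf])
  obtain ⟨q, hq⟩ : ∃ q : ℚ, q = Fintype.card F := ⟨_, rfl⟩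
  obtain ⟨Y, hY⟩ : ∃ Y : ℚ, Y = q ^ n := ⟨_, rfl⟩
  have hZ : q * Y = q ^ Module.finrank F A := by rw [hf, hY]; ring
  have hq2 : 2 < q := by rw [hq]; exact_mod_cast H.two_lt
  have h1 := H.sum_perp A hA q Y _ hq hY hZ
  have hle : ∀ y ∈ Q.filter (fun y => y ∉ A),
      ((univ.filter (fun c => c ∈ A ∧ y + c ∈ Q)).card : ℚ) ≤ Y := by
    intro y hy
    rw [mem_filter] at hy
    have := H.perp_le A hA q _ hq hZ y hy.1 (hnf y hy.1 hy.2)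
    exact le_of_mul_le_mul_left this (by linarith)
  have hsum : ∑ y ∈ Q.filter (fun y => y ∉ A),
      ((univ.filter (fun c => c ∈ A ∧ y + c ∈ Q)).card : ℚ) = ∑ y ∈ Q.filter (fun y => y ∉ A), Y := by
    rw [h1, sum_const, nsmul_eq_mul, H.card_notin A hA q Y _ hq hY hZ]
    ring
  have := (Finset.sum_eq_sum_iff_of_le hle).1 hsum y (by simp [hy, hyA])
  have h2 : (univ.filter (fun c => c ∈ A ∧ y + c ∈ Q)).card
      = Fintype.card F ^ Module.finrank F (H.perp A hA y hy) := by
    rw [← aux_cardSub]; congr 1; ext c; simp [H.mem_perp]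
  rw [h2, hY, hq] at this
  have h3 : Fintype.card F ^ Module.finrank F (H.perp A hA y hy) = Fintype.card F ^ n := by
    exact_mod_cast this
  exact Nat.pow_right_injective (by have := H.two_lt; omega) h3

/-- two disjoint generators -/
lemma AuxH.exists_disj (H : AuxH F V n Q) (A : Submodule F V) (hA : ∀ c ∈ A, c ∈ Q)
    (hf : Module.finrank F A = n + 1) :
    ∃ B : Submodule F V, (∀ c ∈ B, c ∈ Q) ∧ Module.finrank F B = n + 1 ∧ A ⊓ B = ⊥ := by
  have key : ∀ k : ℕ, ∀ B : Submodule F V, (∀ c ∈ B, c ∈ Q) → Module.finrank F B = n + 1 →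
      Module.finrank F ↥(A ⊓ B) = k →
      ∃ B : Submodule F V, (∀ c ∈ B, c ∈ Q) ∧ Module.finrank F B = n + 1 ∧ A ⊓ B = ⊥ := by
    intro k
    induction k using Nat.strong_induction_on with
    | _ k ih =>
    intro B hB hfB hk
    by_cases hbot : A ⊓ B = ⊥
    · exact ⟨B, hB, hfB, hbot⟩
    obtain ⟨d, hd, hd0⟩ := Submodule.exists_mem_ne_zero_of_ne_bot hbot
    have hdim := Submodule.finrank_sup_add_finrank_inf_eq A B
    have hpos : 0 < Module.finrank F ↥(A ⊓ B) := by
      rw [Nat.pos_iff_ne_zero]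
      intro h
      exact hbot (Submodule.finrank_eq_zero.1 h)
    have hlt : A ⊔ B < ⊤ := by
      rw [lt_top_iff_ne_top]
      intro h
      rw [h, finrank_top, H.fr] at hdim
      omega
    obtain ⟨h, hh0, hh⟩ := Submodule.exists_le_ker_of_lt_top _ hlt
    have hex : ∃ y ∈ Q, h y ≠ 0 ∧ y + d ∉ Q := by
      by_contra hcon
      push Not at hcon
      obtain ⟨q, hq⟩ : ∃ q : ℚ, q = Fintype.card F := ⟨_, rfl⟩
      obtain ⟨Y, hY⟩ : ∃ Y : ℚ, Y = q ^ n := ⟨_, rfl⟩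
      have hq2 : 2 < q := by rw [hq]; exact_mod_cast H.two_lt
      have hY1 : 1 < Y := by rw [hY, hq]; exact H.one_lt
      have hc1 := Finset.card_filter_add_card_filter_not (s := Q) (fun v => h v = 0)
      have hN := H.cardN d (hA d hd.1) hd0
      have hsub : (Q.filter (fun v => ¬ h v = 0)) ∪ univ.filter (fun v => v ∈ A)
          ⊆ Q.filter (fun v => v + d ∈ Q) := by
        intro v hv
        rw [mem_union, mem_filter, mem_filter] at hv
        rw [mem_filter]
        rcases hv with hv | hv
        · exact ⟨hv.1, hcon v hv.1 hv.2⟩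
        · exact ⟨hA v hv.2, hA _ (A.add_mem hv.2 hd.1)⟩
      have hdj : Disjoint (Q.filter (fun v => ¬ h v = 0)) (univ.filter (fun v => v ∈ A)) := by
        rw [Finset.disjoint_left]
        intro v hv hv'
        rw [mem_filter] at hv hv'
        exact hv.2 (hh (Submodule.mem_sup_left hv'.2))
      have hle := Finset.card_le_card hsub
      rw [card_union_of_disjoint hdj, aux_cardSub, hf] at hle
      have hle' : ((Q.filter (fun v => ¬ h v = 0)).card : ℚ) + q * Y ≤ Y ^ 2 + (q - 1) * Y := by
        rw [hY, hq, ← hN]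
        rw [pow_succ, mul_comm (Fintype.card F ^ n)] at hle
        exact_mod_cast hle
      have hc1' := congrArg (Nat.cast (R := ℚ)) hc1
      push_cast at hc1'
      rw [H.cardQ, ← hq, ← hY] at hc1'
      have hp : 0 < (q - 1) * Y := by nlinarith
      have hx : ((Q.filter (fun v => h v = 0)).card : ℚ) ≤ Y ^ 2 + (q - 1) * Y := by
        rcases H.cntQ h hh0 with h1 | h1 <;> rw [← hq, ← hY] at h1 <;> rw [h1]
        linarith
      have hp : 0 < (q - 2) * Y ^ 2 := by
        have : 0 < q - 2 := by linarith
        positivity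
      linarith
    obtain ⟨y, hy, hhy, hyd⟩ := hex
    have hyB : y ∉ B := fun hyB => hhy (hh (Submodule.mem_sup_right hyB))
    have hyP : y ∉ H.perp B hB y hy := fun h => hyB h.1
    have hsub := H.sup_sub (H.perp B hB y hy) (fun c hc => hB c hc.1) y hy (fun c hc => hc.2)
    refine ih _ ?_ (H.perp B hB y hy ⊔ (F ∙ y)) hsub
      (by rw [aux_finrank_sup _ _ hyP, H.perp_card B hB hfB y hy hyB]) rfl
    rw [← hk]
    apply Submodule.finrank_lt_finrank_of_lt
    have hle : A ⊓ (H.perp B hB y hy ⊔ (F ∙ y)) ≤ A ⊓ H.perp B hB y hy := by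
      rintro v ⟨hvA, hv⟩
      refine ⟨hvA, ?_⟩
      obtain ⟨c, hc, z, hz, rfl⟩ := Submodule.mem_sup.1 hv
      obtain ⟨a, rfl⟩ := Submodule.mem_span_singleton.1 hz
      have h1 : h (c + a • y) = 0 := hh (Submodule.mem_sup_left hvA)
      have h2 : h c = 0 := hh (Submodule.mem_sup_right hc.1)
      rw [map_add, h2, zero_add, map_smul, smul_eq_mul, mul_eq_zero] at h1
      rcases h1 with h1 | h1
      · rw [h1, zero_smul, add_zero]; exact hc
      · exact absurd h1 hhy
    refine lt_of_le_of_ne (fun v hv => ⟨hv.1, (hle hv).2.1⟩) fun heq => ?_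
    rw [← heq] at hd
    exact hyd ((hle hd).2.2)
  exact key _ A hA hf rfl

end
end Helpers

section Bil

lemma aux_func {F B : Type*} [Field F] [AddCommGroup B] [Module F B] [Module.Finite F B]
    (P : Submodule F B) (hP : Module.finrank F P + 1 = Module.finrank F B) (b0 : B) (hb : b0 ∉ P) :
    ∃ g : B →ₗ[F] F, g b0 = 1 ∧ ∀ b, g b = 0 ↔ b ∈ P := by
  obtain ⟨f, hf, hfP⟩ := aux_sep P b0 hb
  have hle : P ≤ LinearMap.ker f := fun b hbP => hfP b hbP
  have hf0 : f ≠ 0 := by rintro rfl; exact hf rfl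
  have h1 := Module.Dual.finrank_ker_add_one_of_ne_zero (K := F) hf0
  have heq : P = LinearMap.ker f := Submodule.eq_of_le_of_finrank_eq hle (by omega)
  refine ⟨(f b0)⁻¹ • f, by simp [hf], fun b => ?_⟩
  rw [heq, LinearMap.mem_ker, LinearMap.smul_apply, smul_eq_mul, mul_eq_zero]
  simp [hf]

lemma aux_bil {F A B : Type*} [Field F] [AddCommGroup A] [Module F A] [AddCommGroup B] [Module F B]
    (lam : F) (hl0 : lam ≠ 0) (hl1 : lam ≠ 1)
    (PB : A → Submodule F B) (PA : B → Submodule F A) (hPP : ∀ a b, b ∈ PB a ↔ a ∈ PA b)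
    (hB : ∀ a b0, b0 ∉ PB a → ∃ g : B →ₗ[F] F, g b0 = 1 ∧ ∀ b, g b = 0 ↔ b ∈ PB a)
    (hA : ∀ b a0, a0 ∉ PA b → ∃ g : A →ₗ[F] F, g a0 = 1 ∧ ∀ a, g a = 0 ↔ a ∈ PA b)
    (hL : ∀ a1 b1 a2 b2, b1 ∈ PB a1 → b2 ∈ PB a2 → b2 - b1 ∈ PB (a2 - a1) →
      ∀ l : F, b1 + l • (b2 - b1) ∈ PB (a1 + l • (a2 - a1)))
    (a0 : A) (b0 : B) (h0 : b0 ∉ PB a0) :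
    ∃ T : A →ₗ[F] B →ₗ[F] F, ∀ a b, T a b = 0 ↔ b ∈ PB a := by
  have h0' : a0 ∉ PA b0 := fun h => h0 ((hPP _ _).2 h)
  obtain ⟨σ, hσ0, hσ⟩ := hA b0 a0 h0'
  have hne : ∀ a, σ a ≠ 0 → b0 ∉ PB a := fun a ha h => ha ((hσ a).2 ((hPP _ _).1 h))
  have hex : ∀ a, ∃ g : B →ₗ[F] F, σ a ≠ 0 → g b0 = 1 ∧ ∀ b, g b = 0 ↔ b ∈ PB a := by
    intro a
    by_cases ha : σ a = 0
    · exact ⟨0, fun h => absurd ha h⟩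
    · obtain ⟨g, hg⟩ := hB a b0 (hne a ha)
      exact ⟨g, fun _ => hg⟩
  choose τ hτ using hex
  have τ1 : ∀ a, σ a ≠ 0 → τ a b0 = 1 := fun a ha => (hτ a ha).1
  have τ2 : ∀ a, σ a ≠ 0 → ∀ b, τ a b = 0 ↔ b ∈ PB a := fun a ha => (hτ a ha).2
  -- functionals determined by kernels
  have huniq : ∀ a, σ a ≠ 0 → ∀ g : B →ₗ[F] F, g b0 = 1 → (∀ b, g b = 0 → b ∈ PB a) → τ a = g := by
    intro a ha g hg hk
    ext b
    have h1 : b - g b • b0 ∈ PB a := hk _ (by simp [hg])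
    have h2 := (τ2 a ha _).2 h1
    rw [map_sub, map_smul, τ1 a ha] at h2
    simpa [sub_eq_zero] using h2
  have hline : ∀ a1 a2, σ a1 = 1 → σ a2 = 1 → ∀ l : F,
      τ (a1 + l • (a2 - a1)) = τ a1 + l • (τ a2 - τ a1) := by
    intro a1 a2 h1 h2 l
    by_cases hl : l = 0
    · simp [hl]
    have h1' : σ a1 ≠ 0 := by rw [h1]; exact one_ne_zero
    have h2' : σ a2 ≠ 0 := by rw [h2]; exact one_ne_zero
    apply huniq
    · simp [h1, h2]
    · simp [τ1 a1 h1', τ1 a2 h2']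
    · intro b hb
      have hb' : τ a1 b + l * (τ a2 b - τ a1 b) = 0 := by simpa using hb
      have k1 : b - τ a1 b • b0 ∈ PB a1 := by
        rw [← τ2 a1 h1']; simp [τ1 a1 h1']
      have k2 : b - τ a1 b • b0 + (τ a1 b / l) • b0 ∈ PB a2 := by
        rw [← τ2 a2 h2']; simp only [map_add, map_sub, map_smul, τ1 a2 h2', smul_eq_mul, mul_one]
        field_simp
        linear_combination hb'
      have k3 : (b - τ a1 b • b0 + (τ a1 b / l) • b0) - (b - τ a1 b • b0) ∈ PB (a2 - a1) := by
        rw [add_sub_cancel_left]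
        apply Submodule.smul_mem
        rw [hPP, ← hσ]; simp [h1, h2]
      have := hL _ _ _ _ k1 k2 k3 l
      rw [add_sub_cancel_left, smul_smul, mul_div_cancel₀ _ hl, sub_add_cancel] at this
      exact this
  -- the linear part
  have hf_line : ∀ u v, σ u = 0 → σ v = 0 → ∀ l : F,
      τ (a0 + (u + l • (v - u))) - τ a0 = (τ (a0 + u) - τ a0)
        + l • ((τ (a0 + v) - τ a0) - (τ (a0 + u) - τ a0)) := by
    intro u v hu hv l
    have := hline (a0 + u) (a0 + v) (by simp [hu, hσ0]) (by simp [hv, hσ0]) l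
    have e : a0 + (u + l • (v - u)) = a0 + u + l • (a0 + v - (a0 + u)) := by module
    rw [e, this]; module
  have hf_smul : ∀ v, σ v = 0 → ∀ l : F,
      τ (a0 + l • v) - τ a0 = l • (τ (a0 + v) - τ a0) := by
    intro v hv l
    have := hf_line 0 v (map_zero _) hv l
    simpa using this
  have hf_add : ∀ u v, σ u = 0 → σ v = 0 →
      τ (a0 + (u + v)) - τ a0 = (τ (a0 + u) - τ a0) + (τ (a0 + v) - τ a0) := by
    intro u v hu hv
    have hl2 : 1 - lam ≠ 0 := sub_ne_zero.2 (Ne.symm hl1)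
    have h := hf_line ((1 - lam)⁻¹ • u) (lam⁻¹ • v) (by simp [hu]) (by simp [hv]) lam
    have e : (1 - lam)⁻¹ • u + lam • (lam⁻¹ • v - (1 - lam)⁻¹ • u) = u + v := by
      have e1 : (1 - lam)⁻¹ • u + lam • (lam⁻¹ • v - (1 - lam)⁻¹ • u)
        = ((1 - lam) * (1 - lam)⁻¹) • u + (lam * lam⁻¹) • v := by module
      rw [e1, mul_inv_cancel₀ hl2, mul_inv_cancel₀ hl0, one_smul, one_smul]
    rw [e, hf_smul u hu, hf_smul v hv] at h
    rw [h]
    have e1 : (1 - lam)⁻¹ • (τ (a0 + u) - τ a0) + lam • (lam⁻¹ • (τ (a0 + v) - τ a0)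
        - (1 - lam)⁻¹ • (τ (a0 + u) - τ a0))
        = ((1 - lam) * (1 - lam)⁻¹) • (τ (a0 + u) - τ a0)
          + (lam * lam⁻¹) • (τ (a0 + v) - τ a0) := by module
    rw [e1, mul_inv_cancel₀ hl2, mul_inv_cancel₀ hl0, one_smul, one_smul]
  have hker : ∀ a, σ (a - σ a • a0) = 0 := by intro a; simp [hσ0]
  let T : A →ₗ[F] B →ₗ[F] F :=
    { toFun := fun a => σ a • τ a0 + (τ (a0 + (a - σ a • a0)) - τ a0)
      map_add' := by
        intro a a'
        have e : a + a' - σ (a + a') • a0 = (a - σ a • a0) + (a' - σ a' • a0) := by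
          rw [map_add]; module
        rw [e, hf_add _ _ (hker a) (hker a'), map_add]; module
      map_smul' := by
        intro c a
        have e : c • a - σ (c • a) • a0 = c • (a - σ a • a0) := by
          rw [map_smul, smul_eq_mul]; module
        rw [e, hf_smul _ (hker a), map_smul, smul_eq_mul, RingHom.id_apply]; module }
  have hT : ∀ a, T a = σ a • τ a0 + (τ (a0 + (a - σ a • a0)) - τ a0) := fun _ => rfl
  refine ⟨T, fun a b => ?_⟩
  have hσ0' : σ a0 ≠ 0 := by rw [hσ0]; exact one_ne_zero
  by_cases ha : σ a = 0
  · rw [hT, ha, zero_smul, zero_smul, sub_zero, zero_add]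
    have hs : σ (a0 + a) ≠ 0 := by rw [map_add, ha, add_zero]; exact hσ0'
    have hb0 : b0 ∈ PB a := by rw [hPP, ← hσ]; exact ha
    rw [LinearMap.sub_apply]
    constructor
    · intro h
      have k1 : b - τ a0 b • b0 ∈ PB a0 := by rw [← τ2 a0 hσ0']; simp [τ1 a0 hσ0']
      have k2 : b - τ a0 b • b0 ∈ PB (a0 + a) := by
        rw [← τ2 _ hs]; simp [τ1 _ hs, h]
      have k3 : b - τ a0 b • b0 ∈ PB a := by
        rw [hPP] at k1 k2 ⊢
        simpa using Submodule.sub_mem _ k2 k1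
      simpa using Submodule.add_mem _ k3 (Submodule.smul_mem _ (τ a0 b) hb0)
    · intro h
      have k1 : b - τ a0 b • b0 ∈ PB a0 := by rw [← τ2 a0 hσ0']; simp [τ1 a0 hσ0']
      have k3 : b - τ a0 b • b0 ∈ PB a := Submodule.sub_mem _ h (Submodule.smul_mem _ _ hb0)
      have k2 : b - τ a0 b • b0 ∈ PB (a0 + a) := by
        rw [hPP] at k1 k3 ⊢
        exact Submodule.add_mem _ k1 k3
      rw [← τ2 _ hs, map_sub, map_smul, τ1 _ hs] at k2
      simpa using k2
  · have h1 : T a = σ a • τ (a0 + (σ a)⁻¹ • (a - σ a • a0)) := by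
      have := hf_smul _ (hker a) (σ a)⁻¹
      rw [sub_eq_iff_eq_add] at this
      rw [hT, this, smul_add, smul_smul, mul_inv_cancel₀ ha, one_smul]
      module
    have h2 : a0 + (σ a)⁻¹ • (a - σ a • a0) = (σ a)⁻¹ • a := by
      rw [smul_sub, smul_smul, inv_mul_cancel₀ ha, one_smul]; module
    rw [h1, h2, LinearMap.smul_apply, smul_eq_mul, mul_eq_zero, or_iff_right ha, τ2 _ (by simp [ha]),
      hPP, hPP]
    constructor
    · intro h
      have := Submodule.smul_mem _ (σ a) h
      rwa [smul_smul, mul_inv_cancel₀ ha, one_smul] at this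
    · intro h; exact Submodule.smul_mem _ _ h

end Bil

section Main
open Finset Classical

lemma AuxH.finrank_comap {F V : Type*} [Field F] [Fintype F] [AddCommGroup V] [Module F V] [Fintype V]
    [Fintype (Module.Dual F V)] {n : ℕ} {Q : Finset V} (H : AuxH F V n Q)
    (A : Submodule F V) (hA : ∀ c ∈ A, c ∈ Q)
    (hf : Module.finrank F A = n + 1) (y : V) (hy : y ∈ Q) (hyA : y ∉ A) :
    Module.finrank F ↥((H.perp A hA y hy).comap A.subtype) + 1 = Module.finrank F A := by
  have hle : H.perp A hA y hy ≤ A := fun c hc => hc.1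
  rw [LinearEquiv.finrank_eq (Submodule.comapSubtypeEquivOfLe hle), H.perp_card A hA hf y hy hyA, hf]

theorem aux_main {F V : Type*} [Field F] [Fintype F] [AddCommGroup V] [Module F V] [Fintype V]
    [Fintype (Module.Dual F V)] {n : ℕ} {Q : Finset V} (H : AuxH F V n Q) :
    ∃ ψ : QuadraticForm F V, (∀ v, v ∈ Q ↔ ψ v = 0) ∧
      (∀ x, (∀ y, QuadraticMap.polar ψ x y = 0) → x = 0) ∧
      (∃ W : Submodule F V, Module.finrank F W = n + 1 ∧ ∀ v ∈ W, v ∈ Q) := by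
  obtain ⟨A, hA, hfA⟩ := H.exists_gen (n + 1) le_rfl
  obtain ⟨B, hB, hfB, hAB⟩ := H.exists_disj A hA hfA
  have hcompl : IsCompl A B := by
    refine ⟨disjoint_iff.2 hAB, codisjoint_iff.2 ?_⟩
    apply Submodule.eq_top_of_finrank_eq
    have := Submodule.finrank_sup_add_finrank_inf_eq A B
    rw [hAB, finrank_bot] at this
    rw [H.fr]; omega
  have hBA : B ⊓ A = ⊥ := by rw [inf_comm]; exact hAB
  have disj : ∀ v, v ∈ A → v ∈ B → v = 0 := by
    intro v h1 h2
    have : v ∈ A ⊓ B := ⟨h1, h2⟩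
    rw [hAB] at this
    exact (Submodule.mem_bot F).1 this
  obtain ⟨lam, hl0, hl1⟩ := H.exists_ne
  let PB : A → Submodule F B := fun a => (H.perp B hB a (hA a a.2)).comap B.subtype
  let PA : B → Submodule F A := fun b => (H.perp A hA b (hB b b.2)).comap A.subtype
  have hPB : ∀ (a : A) (b : B), b ∈ PB a ↔ (a : V) + b ∈ Q := by
    intro a b
    change ((b : V) ∈ B ∧ (a : V) + b ∈ Q) ↔ _
    exact and_iff_right b.2
  have hPA : ∀ (a : A) (b : B), a ∈ PA b ↔ (a : V) + b ∈ Q := by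
    intro a b
    change ((a : V) ∈ A ∧ (b : V) + a ∈ Q) ↔ _
    rw [add_comm]
    exact and_iff_right a.2
  have hBr : ∀ a : A, a ≠ 0 → Module.finrank F (PB a) + 1 = Module.finrank F B := by
    intro a ha
    exact H.finrank_comap B hB hfB a (hA a a.2)
      (fun h => ha (Subtype.ext (disj _ a.2 h)))
  have hAr : ∀ b : B, b ≠ 0 → Module.finrank F (PA b) + 1 = Module.finrank F A := by
    intro b hb
    exact H.finrank_comap A hA hfA b (hB b b.2)
      (fun h => hb (Subtype.ext (disj _ h b.2)))
  have hBne : ∀ a : A, a ≠ 0 → ∃ b, b ∉ PB a := by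
    intro a ha
    by_contra hcon
    push Not at hcon
    have h1 := hBr a ha
    have : PB a = ⊤ := by ext b; simp [hcon b]
    rw [this, finrank_top] at h1
    omega
  have hAne : ∀ b : B, b ≠ 0 → ∃ a, a ∉ PA b := by
    intro a ha
    by_contra hcon
    push Not at hcon
    have h1 := hAr a ha
    have : PA a = ⊤ := by ext b; simp [hcon b]
    rw [this, finrank_top] at h1
    omega
  have hAnt : ∃ a0 : A, a0 ≠ 0 := by
    have : 0 < Module.finrank F A := by omega
    have := Module.finrank_pos_iff_exists_ne_zero.1 this
    exact this
  obtain ⟨a0, ha0⟩ := hAnt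
  obtain ⟨b0, hb0⟩ := hBne a0 ha0
  obtain ⟨T, hT⟩ := aux_bil lam hl0 hl1 PB PA (fun a b => by rw [hPB, hPA])
    (fun a b0 h => aux_func (PB a) (hBr a (by
      rintro rfl
      apply h
      rw [hPB]
      simpa using hB b0 b0.2)) b0 h)
    (fun b a0 h => aux_func (PA b) (hAr b (by
      rintro rfl
      apply h
      rw [hPA]
      simpa using hA a0 a0.2)) a0 h)
    (by
      intro a1 b1 a2 b2 h1 h2 h3 l
      rw [hPB] at h1 h2 h3 ⊢
      have h1' := H.smul (-1) _ h1
      have h4 := H.line _ h2 _ h1' (by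
        have e : ((a2 : V) + b2) + (-1 : F) • ((a1 : V) + b1)
          = ((a2 - a1 : A) : V) + ((b2 - b1 : B) : V) := by push_cast; module
        rw [e]; exact h3) l (l - 1)
      have e : l • ((a2 : V) + b2) + (l - 1) • ((-1 : F) • ((a1 : V) + b1))
        = ((a1 + l • (a2 - a1) : A) : V) + ((b1 + l • (b2 - b1) : B) : V) := by push_cast; module
      rw [e] at h4; exact h4)
    a0 b0 hb0
  let pA : V →ₗ[F] A := Submodule.projectionOnto A B hcompl
  let pB : V →ₗ[F] B := Submodule.projectionOnto B A hcompl.symm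
  have hdec : ∀ v, ((pA v : A) : V) + (pB v : B) = v := by
    intro v
    exact Submodule.projection_add_projection_eq_self hcompl v
  have pAA : ∀ a : A, pA a = a := fun a => Submodule.projectionOnto_apply_left hcompl a
  have pBB : ∀ a : B, pB a = a := fun a => Submodule.projectionOnto_apply_left hcompl.symm a
  have pAB : ∀ b : B, pA b = 0 := fun b => Submodule.projectionOnto_apply_right hcompl b
  have pBA : ∀ b : A, pB b = 0 := fun b => Submodule.projectionOnto_apply_right hcompl.symm b
  let ψ : QuadraticForm F V := LinearMap.BilinMap.toQuadraticMap (T.compl₁₂ pA pB)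
  have hψ : ∀ v, ψ v = T (pA v) (pB v) := fun v => rfl
  have hpol : ∀ x y, QuadraticMap.polar ψ x y = T (pA x) (pB y) + T (pA y) (pB x) := by
    intro x y
    simp only [QuadraticMap.polar, hψ, map_add, LinearMap.add_apply]
    ring
  refine ⟨ψ, ?_, ?_, A, hfA, hA⟩
  · intro v
    rw [hψ, hT, hPB, hdec]
  · intro x hx
    have h1 : pA x = 0 := by
      by_contra hne
      obtain ⟨b, hb⟩ := hBne _ hne
      rw [← hT] at hb
      have := hx b
      rw [hpol, pAB, pBB] at this
      simp at this
      exact hb this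
    have h2 : pB x = 0 := by
      by_contra hne
      obtain ⟨a, ha⟩ := hAne _ hne
      rw [hPA, ← hPB, ← hT] at ha
      have := hx a
      rw [hpol, pBA, pAA] at this
      simp at this
      exact ha this
    rw [← hdec x, h1, h2]; simp

/-- sizes of polar hyperplane sections -/
theorem aux_sizes {F V : Type*} [Field F] [Fintype F] [AddCommGroup V] [Module F V] [Fintype V]
    [Fintype (Module.Dual F V)] {n : ℕ} {Q : Finset V} (H : AuxH F V n Q)
    (ψ : QuadraticForm F V) (hψ : ∀ v, v ∈ Q ↔ ψ v = 0)
    (hnd : ∀ x, (∀ y, QuadraticMap.polar ψ x y = 0) → x = 0) (d : V) (hd0 : d ≠ 0) :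
    (d ∉ Q ↔ (Q.filter (fun v => QuadraticMap.polar ψ d v = 0)).card = Fintype.card F ^ (2 * n)) := by
  obtain ⟨q, hq⟩ : ∃ q : ℚ, q = Fintype.card F := ⟨_, rfl⟩
  obtain ⟨Y, hY⟩ : ∃ Y : ℚ, Y = q ^ n := ⟨_, rfl⟩
  have hq2 : 2 < q := by rw [hq]; exact_mod_cast H.two_lt
  have hY1 : 1 < Y := by rw [hY, hq]; exact H.one_lt
  have hpos : 0 < (q - 1) * Y := by nlinarith
  let P : V →ₗ[F] Module.Dual F V := QuadraticMap.polarBilin ψ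
  have hP : ∀ x y, P x y = QuadraticMap.polar ψ x y := fun _ _ => rfl
  have hinj : Function.Injective P := by
    rw [injective_iff_map_eq_zero]
    intro x hx
    exact hnd x fun y => by rw [← hP, hx]; rfl
  have hin : ∀ e ∈ Q, e ≠ 0 → ((Q.filter (fun v => P e v = 0)).card : ℚ) = Y ^ 2 + (q - 1) * Y := by
    intro e he he0
    rw [hY, hq, ← H.cardN e he he0]
    congr 2
    apply Finset.filter_congr
    intro v hv
    rw [hP, hψ, QuadraticMap.polar, (hψ e).1 he, (hψ v).1 hv, sub_zero, sub_zero, add_comm]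
  have hge : ∀ e, e ≠ 0 → Y ^ 2 ≤ ((Q.filter (fun v => P e v = 0)).card : ℚ) := by
    intro e he0
    rcases H.cntQ (P e) (fun h => he0 (hinj (by rw [h, map_zero]))) with h1 | h1 <;>
      rw [h1, hY, hq]
    rw [hY, hq] at hpos
    linarith
  have hbij : Function.Bijective P := by
    rw [Fintype.bijective_iff_injective_and_card]
    exact ⟨hinj, by rw [aux_cardDual H, Module.card_eq_pow_finrank (K := F), H.fr]⟩
  have hsum := H.sumAll
  rw [← hbij.sum_comp (fun h : Module.Dual F V => ((Q.filter (fun v => h v = 0)).card : ℚ))] at hsum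
  have hMc := H.cardQ
  have hqm : q ^ (2 * n + 2) = q ^ 2 * Y ^ 2 := by rw [hY]; ring
  rw [← hq, hqm] at hsum
  rw [← hq, ← hY] at hMc
  rw [hMc, ← Finset.sum_filter_add_sum_filter_not univ (fun v => v ∈ Q)] at hsum
  have hs1 : ∑ e ∈ univ.filter (fun v => v ∈ Q), ((Q.filter (fun v => P e v = 0)).card : ℚ)
      = (q * Y ^ 2 + (q - 1) * Y) + (q * Y ^ 2 + (q - 1) * Y - 1) * (Y ^ 2 + (q - 1) * Y) := by
    have e : univ.filter (fun v => v ∈ Q) = Q := by ext; simp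
    rw [e, ← Finset.sum_erase_add _ _ H.zero, Finset.sum_congr rfl
      (g := fun _ => (Y ^ 2 + (q - 1) * Y))]
    · rw [sum_const, nsmul_eq_mul, card_erase_of_mem H.zero, Nat.cast_sub (card_pos.2 ⟨0, H.zero⟩),
        hMc]
      have : ((Q.filter (fun v => P 0 v = 0)).card : ℚ) = q * Y ^ 2 + (q - 1) * Y := by
        rw [← hMc]; simp
      rw [this]; push_cast; ring
    · intro e he
      rw [mem_erase] at he
      exact hin e he.2 he.1
  rw [hs1] at hsum
  have hcn : ((univ.filter (fun v => v ∉ Q)).card : ℚ)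
      = q ^ 2 * Y ^ 2 - (q * Y ^ 2 + (q - 1) * Y) := by
    have h := Finset.card_filter_add_card_filter_not (s := (univ : Finset V)) (fun v => v ∈ Q)
    have e : univ.filter (fun v => v ∈ Q) = Q := by ext; simp
    rw [e, card_univ, Module.card_eq_pow_finrank (K := F), H.fr] at h
    have := congrArg (Nat.cast (R := ℚ)) h
    push_cast at this
    rw [← hq, hqm, hMc] at this
    linarith
  have hs2 : ∑ e ∈ univ.filter (fun v => v ∉ Q), Y ^ 2
      = ∑ e ∈ univ.filter (fun v => v ∉ Q), ((Q.filter (fun v => P e v = 0)).card : ℚ) := by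
    rw [sum_const, nsmul_eq_mul, hcn]
    apply mul_right_cancel₀ (b := q) (by linarith)
    linear_combination -hsum
  have hall := (Finset.sum_eq_sum_iff_of_le (fun e he => hge e (by
    rintro rfl
    simp only [mem_filter, mem_univ, true_and] at he
    exact he H.zero))).1 hs2
  have hYn : Y ^ 2 = ((Fintype.card F ^ (2 * n) : ℕ) : ℚ) := by
    rw [hY, hq]; push_cast; ring
  constructor
  · intro hd
    have := hall d (by simp [hd])
    rw [hYn] at this
    exact (by exact_mod_cast this.symm)
  · intro hc hd
    have h1 := hin d hd hd0
    have h2 : ((Q.filter (fun v => P d v = 0)).card : ℚ) = Y ^ 2 := by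
      rw [hYn]; exact_mod_cast hc
    rw [h2] at h1
    linarith

end Main

section App
open Finset Classical

lemma aux_fib {α β : Type*} [Fintype α] (g : α → β) (p : α → Prop) (P : Set β) (k : ℕ)
    (hk : 0 < k) (h : ∀ b ∈ P, ∀ T : Finset α, (∀ x, x ∈ T ↔ p x ∧ g x = b) → T.card = k)
    (T : Finset α) (hT : ∀ x, x ∈ T ↔ p x ∧ g x ∈ P) :
    T.card = k * P.ncard := by
  have hfin : P.Finite := by
    apply (Set.finite_range g).subset
    intro b hb
    have := h b hb (univ.filter (fun x => p x ∧ g x = b)) (by simp)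
    obtain ⟨x, hx⟩ := Finset.card_pos.1 (this ▸ hk)
    exact ⟨x, (Finset.mem_filter.1 hx).2.2⟩
  rw [Set.ncard_eq_toFinset_card P hfin, Finset.card_eq_sum_card_fiberwise (f := g)
    (t := hfin.toFinset)]
  · rw [Finset.sum_congr rfl (g := fun _ => k)]
    · rw [sum_const, smul_eq_mul, mul_comm]
    · intro b hb
      apply h b (hfin.mem_toFinset.1 hb)
      intro x
      rw [mem_filter, hT]
      constructor
      · rintro ⟨⟨h1, h2⟩, h3⟩
        exact ⟨h1, h3⟩
      · rintro ⟨h1, rfl⟩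
        exact ⟨⟨h1, hfin.mem_toFinset.1 hb⟩, rfl⟩
  · intro x hx
    exact hfin.mem_toFinset.2 ((hT x).1 hx).2

lemma aux_nz {F V : Type*} [Field F] [Fintype F] [AddCommGroup V] [Module F V] [Fintype V]
    (U : Submodule F V) (hU : Module.finrank F U = 1)
    (T : Finset V) (hT : ∀ x, x ∈ T ↔ x ≠ 0 ∧ x ∈ U) :
    T.card = Fintype.card F - 1 := by
  have h := aux_cardSub U
  rw [hU, pow_one] at h
  rw [← h, ← Finset.card_erase_of_mem (a := (0 : V)) (by simp)]
  congr 1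
  ext x
  simp [hT]

lemma aux_span_eq {F V : Type*} [Field F] [AddCommGroup V] [Module F V]
    (U : Submodule F V) (hU : Module.finrank F U = 1) (x : V) (hx : x ≠ 0) :
    Submodule.span F {x} = U ↔ x ∈ U := by
  constructor
  · rintro rfl
    exact Submodule.mem_span_singleton_self x
  · intro h
    have : Module.Finite F U := Module.finite_of_finrank_eq_succ hU
    apply Submodule.eq_of_le_of_finrank_eq
    · rwa [Submodule.span_singleton_le_iff_mem]
    · rw [finrank_span_singleton hx, hU]

/-- counting points via vectors -/
lemma aux_points {F V : Type*} [Field F] [Fintype F] [AddCommGroup V] [Module F V] [Fintype V]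
    (hq : 2 < Fintype.card F)
    (P : Set (Submodule F V)) (hP : ∀ p ∈ P, Module.finrank F p = 1)
    (T : Finset V) (hT : ∀ x, x ∈ T ↔ x ≠ 0 ∧ Submodule.span F {x} ∈ P) :
    T.card = (Fintype.card F - 1) * P.ncard := by
  refine aux_fib _ _ _ _ (by omega) ?_ T hT
  intro b hb T' hT'
  apply aux_nz b (hP b hb)
  intro x
  rw [hT']
  exact and_congr_right (fun hx => aux_span_eq b (hP b hb) x hx)

lemma aux_ker_eq {F V : Type*} [Field F] [AddCommGroup V] [Module F V] [Module.Finite F V]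
    (U : Submodule F V) (hU : Module.finrank F U + 1 = Module.finrank F V) (x : Module.Dual F V)
    (hx : x ≠ 0) :
    LinearMap.ker x = U ↔ x ∈ U.dualAnnihilator := by
  rw [Submodule.mem_dualAnnihilator]
  constructor
  · rintro rfl w hw
    exact hw
  · intro h
    symm
    apply Submodule.eq_of_le_of_finrank_eq
    · exact h
    · have := Module.Dual.finrank_ker_add_one_of_ne_zero (K := F) (f := x) hx
      omega

lemma aux_hyps {F V : Type*} [Field F] [Fintype F] [AddCommGroup V] [Module F V]
    [Module.Finite F V] [Fintype (Module.Dual F V)]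
    (hq : 2 < Fintype.card F)
    (P : Set (Submodule F V)) (hP : ∀ p ∈ P, Module.finrank F p + 1 = Module.finrank F V)
    (T : Finset (Module.Dual F V)) (hT : ∀ x, x ∈ T ↔ x ≠ 0 ∧ LinearMap.ker x ∈ P) :
    T.card = (Fintype.card F - 1) * P.ncard := by
  refine aux_fib _ _ _ _ (by omega) ?_ T hT
  intro b hb T' hT'
  have h1 : Module.finrank F b.dualAnnihilator = 1 := by
    have := Subspace.finrank_add_finrank_dualAnnihilator_eq b
    have := hP b hb
    omega
  apply aux_nz _ h1
  intro x
  rw [hT']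
  exact and_congr_right (fun hx => aux_ker_eq b (hP b hb) x hx)

lemma aux_ker_smul {F V : Type*} [Field F] [AddCommGroup V] [Module F V] (h : Module.Dual F V)
    (c : F) (hc : c ≠ 0) : LinearMap.ker (c • h) = LinearMap.ker h := by
  ext v
  simp [hc]

lemma aux_line {F V : Type*} [Field F] [Fintype F] [AddCommGroup V] [Module F V]
    [Module.Finite F V] [Fintype (Module.Dual F V)] (n : ℕ)
    (hq : 2 < Fintype.card F) (hV : Module.finrank F V = 2 * n + 2)
    (S : Set (Submodule F V)) (hS : ∀ p ∈ S, Module.finrank F p = 2 * n + 1)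
    (hP2 : ∀ W : Submodule F V, Module.finrank F W = 2*n →
      (∃ π ∈ S, W ≤ π) → Fintype.card F - 1 ≤ {π ∈ S | W ≤ π}.ncard)
    (Q : Module.Dual F V → Prop) (hQ : ∀ h, Q h ↔ h = 0 ∨ LinearMap.ker h ∉ S)
    (hsm : ∀ (c : F) h, Q h → Q (c • h))
    (u v : Module.Dual F V) (hu : Q u) (hv : Q v) (huv : Q (u + v)) (a b : F) :
    Q (a • u + b • v) := by
  by_cases hli : LinearIndependent F ![u, v]
  · by_contra hab
    have hfr : Module.finrank F (Submodule.span F {u, v}) = 2 := by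
      have := finrank_span_eq_card hli
      rw [Matrix.range_cons, Matrix.range_cons, Matrix.range_empty, Set.union_empty,
        Set.singleton_union] at this
      simpa using this
    set Φ := Submodule.span F {u, v} with hΦ
    have hW : Module.finrank F Φ.dualCoannihilator = 2 * n := by
      have := Subspace.finrank_add_finrank_dualCoannihilator_eq Φ
      omega
    have hmem : ∀ w : Module.Dual F V, Φ.dualCoannihilator ≤ LinearMap.ker w ↔ w ∈ Φ := by
      intro w
      conv_rhs => rw [← Subspace.dualCoannihilator_dualAnnihilator_eq (W := Φ)]
      rw [Submodule.mem_dualAnnihilator]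
      rfl
    have hab' : ¬ (a • u + b • v = 0) ∧ LinearMap.ker (a • u + b • v) ∈ S := by
      rw [hQ] at hab
      push Not at hab
      exact hab
    have h1 := hP2 _ hW ⟨_, hab'.2, (hmem _).2 (Submodule.mem_span_pair.2 ⟨a, b, rfl⟩)⟩
    have h2 := aux_hyps hq {π ∈ S | Φ.dualCoannihilator ≤ π} (fun p hp => by rw [hS p hp.1, hV])
      (univ.filter (fun x : Module.Dual F V => x ≠ 0 ∧
        LinearMap.ker x ∈ {π ∈ S | Φ.dualCoannihilator ≤ π})) (by simp)
    have h3 : (univ.filter (fun x : Module.Dual F V => x ≠ 0 ∧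
        LinearMap.ker x ∈ {π ∈ S | Φ.dualCoannihilator ≤ π})) ⊆
        ((univ.erase (0 : F)).offDiag).image (fun ab => ab.1 • u + ab.2 • v) := by
      intro x hx
      simp only [Set.mem_ofPred_eq, mem_filter, mem_univ, true_and] at hx
      obtain ⟨hx0, hxS, hxW⟩ := hx
      rw [hmem] at hxW
      obtain ⟨s, t, rfl⟩ := Submodule.mem_span_pair.1 hxW
      have hnQ : ¬ Q (s • u + t • v) := by
        rw [hQ]; push Not; exact ⟨hx0, hxS⟩
      rw [mem_image]
      refine ⟨(s, t), ?_, rfl⟩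
      rw [mem_offDiag]
      refine ⟨?_, ?_, ?_⟩
      · simp only [mem_erase, mem_univ, and_true]
        rintro rfl
        apply hnQ
        rw [zero_smul, zero_add]
        exact hsm _ _ hv
      · simp only [mem_erase, mem_univ, and_true]
        rintro rfl
        apply hnQ
        rw [zero_smul, add_zero]
        exact hsm _ _ hu
      · intro hst
        simp only at hst
        subst hst
        apply hnQ
        rw [← smul_add]
        exact hsm _ _ huv
    have h4 := (card_le_card h3).trans card_image_le
    rw [offDiag_card, card_erase_of_mem (mem_univ _), card_univ] at h4
    have h5 := Nat.mul_le_mul_left (Fintype.card F - 1) h1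
    have h6 : 0 < (Fintype.card F - 1) * (Fintype.card F - 1) := by
      apply Nat.mul_pos <;> omega
    have h7 := h2.symm.trans_le h4
    omega
  · rw [LinearIndependent.pair_iff] at hli
    push Not at hli
    obtain ⟨s, t, h0, hst⟩ := hli
    by_cases hs : s = 0
    · have ht := hst hs
      have e : v = (0 : F) • u := by
        rw [hs, zero_smul, zero_add] at h0
        rcases smul_eq_zero.1 h0 with h | h
        · exact absurd h ht
        · rw [h, zero_smul]
      rw [e, zero_smul, smul_zero, add_zero]
      exact hsm _ _ hu
    · have e : u = (-(s⁻¹ * t)) • v := by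
        have : s⁻¹ • (s • u + t • v) = 0 := by rw [h0, smul_zero]
        rw [smul_add, smul_smul, inv_mul_cancel₀ hs, one_smul, smul_smul] at this
        rw [eq_neg_of_add_eq_zero_left this]
        module
      rw [e, smul_smul, ← add_smul]
      exact hsm _ _ hv

lemma aux_setup {F V : Type*} [Field F] [Fintype F] [AddCommGroup V] [Module F V]
    [Module.Finite F V] [Fintype (Module.Dual F V)] (n : ℕ) (hn : 2 ≤ n)
    (hq : 2 < Fintype.card F) (hV : Module.finrank F V = 2 * n + 2)
    (S : Set (Submodule F V)) (hS : ∀ p ∈ S, Module.finrank F p = 2 * n + 1)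
    (hP1 : ∀ p : Submodule F V, Module.finrank F p = 1 →
      {π ∈ S | p ≤ π}.ncard = Fintype.card F^n * (Fintype.card F^n - 1) ∨
      {π ∈ S | p ≤ π}.ncard = Fintype.card F^(2*n))
    (hP2 : ∀ W : Submodule F V, Module.finrank F W = 2*n →
      (∃ π ∈ S, W ≤ π) → Fintype.card F - 1 ≤ {π ∈ S | W ≤ π}.ncard)
    (Q : Finset (Module.Dual F V)) (hQ : ∀ h, h ∈ Q ↔ (h = 0 ∨ LinearMap.ker h ∉ S)) :
    AuxH F (Module.Dual F V) n Q := by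
  have hsm : ∀ (c : F) (h : Module.Dual F V), (h = 0 ∨ LinearMap.ker h ∉ S) →
      (c • h = 0 ∨ LinearMap.ker (c • h) ∉ S) := by
    intro c h hh
    by_cases hc : c = 0
    · left; rw [hc, zero_smul]
    · rw [aux_ker_smul h c hc]
      rcases hh with hh | hh
      · left; rw [hh, smul_zero]
      · exact Or.inr hh
  refine ⟨hq, hn, ?_, ?_, ?_, ?_, ?_⟩
  · rw [Subspace.dual_finrank_eq, hV]
  · simp [hQ]
  · intro c v hv
    simp only [hQ] at hv ⊢
    exact hsm c v hv
  · intro u hu v hv huv a b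
    simp only [hQ] at hu hv huv ⊢
    exact aux_line n hq hV S hS hP2 (fun h => h = 0 ∨ LinearMap.ker h ∉ S) (fun h => Iff.rfl)
      hsm u v hu hv huv a b
  · intro h hh
    obtain ⟨x, rfl⟩ := (Module.evalEquiv F V).surjective h
    have hx : x ≠ 0 := by
      rintro rfl
      exact hh (map_zero _)
    have h1' := aux_hyps hq {π ∈ S | Submodule.span F {x} ≤ π}
      (fun p hp => by rw [hS p hp.1, hV])
    have hfr : Module.finrank F (Submodule.span F {x}) = 1 := finrank_span_singleton hx
    have h2 := aux_cardSub (Submodule.span F {x}).dualAnnihilator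
    have hfr2 : Module.finrank F (Submodule.span F {x}).dualAnnihilator = 2 * n + 1 := by
      have := Subspace.finrank_add_finrank_dualAnnihilator_eq (Submodule.span F {x})
      omega
    rw [hfr2] at h2
    have hmem : ∀ w : Module.Dual F V, w ∈ (Submodule.span F {x}).dualAnnihilator ↔ w x = 0 := by
      intro w
      rw [Submodule.mem_dualAnnihilator]
      constructor
      · intro h
        exact h x (Submodule.mem_span_singleton_self x)
      · intro h y hy
        obtain ⟨c, rfl⟩ := Submodule.mem_span_singleton.1 hy
        rw [map_smul, h, smul_zero]
    set T := Q.filter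
      (fun v => Module.evalEquiv F V x v = 0) with hT
    have hTm : ∀ w, w ∈ T ↔ (w = 0 ∨ LinearMap.ker w ∉ S) ∧ w x = 0 := by
      intro w
      rw [hT, mem_filter, hQ]
      simp
    obtain ⟨T2, hT2⟩ : ∃ T2 : Finset (Module.Dual F V), ∀ w, w ∈ T2 ↔ w ≠ 0 ∧
        LinearMap.ker w ∈ {π ∈ S | Submodule.span F {x} ≤ π} :=
      ⟨univ.filter (fun w => w ≠ 0 ∧
        LinearMap.ker w ∈ {π ∈ S | Submodule.span F {x} ≤ π}), by simp⟩
    have h1 := h1' T2 hT2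
    have h3 : T.card + T2.card =
        (univ.filter (fun w : Module.Dual F V =>
          w ∈ (Submodule.span F {x}).dualAnnihilator)).card := by
      rw [← card_union_of_disjoint]
      · congr 1
        ext w
        simp only [mem_union, mem_filter, mem_univ, true_and, Set.mem_ofPred_eq, hTm, hT2,
          Submodule.span_singleton_le_iff_mem, LinearMap.mem_ker, hmem]
        tauto
      · rw [disjoint_left]
        intro w h1 h2
        rw [hTm] at h1
        rw [hT2] at h2
        have := h2.2.1
        tauto
    rw [h1, h2] at h3
    have hY : 1 ≤ Fintype.card F ^ n := Nat.one_le_pow _ _ (by omega)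
    have e1 : Fintype.card F ^ (2 * n) = Fintype.card F ^ n * Fintype.card F ^ n := by ring
    have e2 : Fintype.card F ^ (2 * n + 1) =
      Fintype.card F * (Fintype.card F ^ n * Fintype.card F ^ n) := by ring
    have e3 : Fintype.card F ^ (n + 1) = Fintype.card F * Fintype.card F ^ n := by ring
    obtain ⟨k, hk⟩ : ∃ k, Fintype.card F = k + 1 := ⟨Fintype.card F - 1, by omega⟩
    rw [e2] at h3
    rw [e1, e3]
    obtain ⟨Y, hYe⟩ : ∃ Y, Fintype.card F ^ n = Y + 1 := ⟨Fintype.card F ^ n - 1, by omega⟩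
    rcases hP1 _ hfr with h | h
    · right
      rw [h, hYe, hk] at h3
      rw [hYe, hk]
      simp only [Nat.add_sub_cancel] at h3
      nlinarith
    · left
      rw [h, e1, hYe, hk] at h3
      rw [hYe]
      simp only [Nat.add_sub_cancel] at h3
      nlinarith

end App

section Final
open Finset Classical

theorem aux_final {F V : Type*} [Field F] [Fintype F] [AddCommGroup V] [Module F V]
    [Module.Finite F V] [Fintype V] [Fintype (Module.Dual F V)]
    [Fintype (Module.Dual F (Module.Dual F V))] (n : ℕ) (hn : 2 ≤ n)
    (hq : 2 < Fintype.card F) (hV : Module.finrank F V = 2 * n + 2)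
    (S : Set (Submodule F V)) (hS : ∀ p ∈ S, Module.finrank F p = 2 * n + 1)
    (hP1 : ∀ p : Submodule F V, Module.finrank F p = 1 →
      {π ∈ S | p ≤ π}.ncard = Fintype.card F^n * (Fintype.card F^n - 1) ∨
      {π ∈ S | p ≤ π}.ncard = Fintype.card F^(2*n))
    (hP2 : ∀ W : Submodule F V, Module.finrank F W = 2*n →
      (∃ π ∈ S, W ≤ π) → Fintype.card F - 1 ≤ {π ∈ S | W ≤ π}.ncard) :
    ∃ φ : QuadraticForm F V,
      (∀ x, (∀ y, φ (x + y) - φ x - φ y = 0) → x = 0) ∧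
      (∃ W : Submodule F V, Module.finrank F W = n+1 ∧ ∀ v ∈ W, φ v = 0) ∧
      S = {π : Submodule F V | Module.finrank F π = 2*n+1 ∧
        {p : Submodule F V |
          Module.finrank F p = 1 ∧ p ≤ π ∧ ∀ v ∈ p, φ v = 0}.ncard
          = (Fintype.card F^(2*n) - 1)/(Fintype.card F - 1)} := by
  obtain ⟨Q, H, hQ⟩ : ∃ Q : Finset (Module.Dual F V), AuxH F (Module.Dual F V) n Q ∧
      ∀ h, h ∈ Q ↔ (h = 0 ∨ LinearMap.ker h ∉ S) :=
    by
    obtain ⟨Q, hQ⟩ : ∃ Q : Finset (Module.Dual F V),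
        ∀ h, h ∈ Q ↔ (h = 0 ∨ LinearMap.ker h ∉ S) :=
      ⟨univ.filter (fun h => h = 0 ∨ LinearMap.ker h ∉ S), by simp⟩
    exact ⟨Q, aux_setup n hn hq hV S hS hP1 hP2 Q hQ, hQ⟩
  obtain ⟨ψ, hψ, hnd, W, hW, hWQ⟩ := aux_main H
  have hinj : Function.Injective (QuadraticMap.polarBilin ψ) := by
    rw [injective_iff_map_eq_zero]
    intro x hx
    apply hnd
    intro y
    have := LinearMap.congr_fun hx y
    simpa using this
  let P : Module.Dual F V ≃ₗ[F] V :=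
    (LinearEquiv.ofInjectiveOfFinrankEq (QuadraticMap.polarBilin ψ) hinj
      (Subspace.dual_finrank_eq (K := F) (V := Module.Dual F V)).symm).trans
      (Module.evalEquiv F V).symm
  have hP : ∀ h h' : Module.Dual F V, h' (P h) = QuadraticMap.polar ψ h h' := by
    intro h h'
    have e : Module.evalEquiv F V (P h) = QuadraticMap.polarBilin ψ h := by
      simp only [P, LinearEquiv.trans_apply, LinearEquiv.apply_symm_apply]
      rfl
    have := LinearMap.congr_fun e h'
    simpa using this
  let φ : QuadraticForm F V := ψ.comp P.symm.toLinearMap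
  have hφ : ∀ x, φ x = ψ (P.symm x) := fun x => rfl
  refine ⟨φ, ?_, ⟨W.map P.toLinearMap, ?_, ?_⟩, ?_⟩
  · intro x hx
    have : P.symm x = 0 := by
      apply hnd
      intro y
      have := hx (P y)
      simp only [hφ, map_add, LinearEquiv.symm_apply_apply] at this
      exact this
    simpa using this
  · rw [← hW]
    exact LinearEquiv.finrank_map_eq P W
  · rintro _ ⟨w, hw, rfl⟩
    rw [hφ]
    simp only [LinearEquiv.coe_coe, LinearEquiv.symm_apply_apply]
    exact (hψ w).1 (hWQ w hw)
  · have key : ∀ π : Submodule F V, Module.finrank F π = 2 * n + 1 →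
        (π ∈ S ↔ {p : Submodule F V |
          Module.finrank F p = 1 ∧ p ≤ π ∧ ∀ v ∈ p, φ v = 0}.ncard
          = (Fintype.card F^(2*n) - 1)/(Fintype.card F - 1)) := by
      intro π hπ
      have h1 : Module.finrank F π.dualAnnihilator = 1 := by
        have := Subspace.finrank_add_finrank_dualAnnihilator_eq π
        omega
      obtain ⟨d, hd, hd0⟩ : ∃ d ∈ π.dualAnnihilator, d ≠ 0 := by
        apply Submodule.exists_mem_ne_zero_of_ne_bot
        intro h
        rw [h, finrank_bot] at h1
        omega
      have hker := (aux_ker_eq π (by omega) d hd0).2 hd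
      have hsz := aux_sizes H ψ hψ hnd d hd0
      have hdS : d ∉ Q ↔ π ∈ S := by
        rw [hQ, hker]
        simp [hd0]
      rw [← hdS, hsz]
      set c := Q.filter (fun v => QuadraticMap.polar ψ d v = 0) with hc
      have h0c : (0 : Module.Dual F V) ∈ c := by
        rw [hc, mem_filter]
        exact ⟨H.zero, by simp [QuadraticMap.polar]⟩
      have hpts := aux_points hq {p : Submodule F V |
          Module.finrank F p = 1 ∧ p ≤ π ∧ ∀ v ∈ p, φ v = 0} (fun p hp => hp.1)
          ((c.erase 0).image P) (by
          intro x
          obtain ⟨h, rfl⟩ := P.surjective x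
          rw [P.injective.mem_finset_image, mem_erase, hc, mem_filter, hψ, QuadraticMap.polar_comm,
            ← hP]
          have e0 : P h ≠ 0 ↔ h ≠ 0 := by simp
          rw [e0]
          apply and_congr_right
          intro hh
          rw [Set.mem_ofPred_eq, Submodule.span_singleton_le_iff_mem, ← hker, LinearMap.mem_ker]
          constructor
          · rintro ⟨h1, h2⟩
            refine ⟨finrank_span_singleton (e0.2 hh), h2, ?_⟩
            intro v hv
            obtain ⟨a, rfl⟩ := Submodule.mem_span_singleton.1 hv
            rw [QuadraticMap.map_smul, hφ, LinearEquiv.symm_apply_apply, h1, smul_zero]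
          · rintro ⟨-, h2, h3⟩
            refine ⟨?_, h2⟩
            have := h3 _ (Submodule.mem_span_singleton_self _)
            rwa [hφ, LinearEquiv.symm_apply_apply] at this)
      rw [card_image_of_injective _ P.injective, card_erase_of_mem h0c] at hpts
      have hcpos : 0 < c.card := card_pos.2 ⟨0, h0c⟩
      have hdvd : Fintype.card F - 1 ∣ Fintype.card F ^ (2 * n) - 1 := by
        simpa using Nat.sub_dvd_pow_sub_pow (Fintype.card F) 1 (2 * n)
      have hq1 : 0 < Fintype.card F - 1 := by omega
      have hpw : 0 < Fintype.card F ^ (2 * n) := Nat.pow_pos (by omega)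
      constructor
      · intro h
        rw [h] at hpts
        rw [hpts, Nat.mul_div_cancel_left _ hq1]
      · intro h
        rw [h, Nat.mul_div_cancel' hdvd] at hpts
        omega
    ext π
    constructor
    · intro h
      exact ⟨hS π h, (key π (hS π h)).1 h⟩
    · rintro ⟨h1, h2⟩
      exact (key π h1).2 h2

end Final

/-- For `n ≥ 2` and prime power `q > 2`, a nonempty family `S` of hyperplanes
of `PG(2n+1,q)` satisfying (P1⁺) and (P2) is the family of parabolic hyperplanes of some
nonsingular hyperbolic quadric `Q⁺(2n+1,q)`. -/
theorem stmt_0 (n : ℕ) (hn : 2 ≤ n)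
    (F : Type) [Field F] [Fintype F] (q : ℕ) (hq : Fintype.card F = q) (hq2 : 2 < q)
    (S : Set (Submodule F (Fin (2*n+2) → F)))
    (hS : S.Nonempty)
    (hhyp : ∀ π ∈ S, Module.finrank F π = 2*n+1)
    (hP1 : ∀ p : Submodule F (Fin (2*n+2) → F), Module.finrank F p = 1 →
      {π ∈ S | p ≤ π}.ncard = q^n * (q^n - 1) ∨ {π ∈ S | p ≤ π}.ncard = q^(2*n))
    (hP2 : ∀ W : Submodule F (Fin (2*n+2) → F), Module.finrank F W = 2*n →
      (∃ π ∈ S, W ≤ π) → q - 1 ≤ {π ∈ S | W ≤ π}.ncard) :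
    ∃ φ : QuadraticForm F (Fin (2*n+2) → F),
      (∀ x, (∀ y, φ (x + y) - φ x - φ y = 0) → x = 0) ∧
      (∃ W : Submodule F (Fin (2*n+2) → F), Module.finrank F W = n+1 ∧ ∀ v ∈ W, φ v = 0) ∧
      S = {π : Submodule F (Fin (2*n+2) → F) | Module.finrank F π = 2*n+1 ∧
        {p : Submodule F (Fin (2*n+2) → F) |
          Module.finrank F p = 1 ∧ p ≤ π ∧ ∀ v ∈ p, φ v = 0}.ncard = (q^(2*n) - 1)/(q - 1)} := by
  classical
  subst hq
  haveI : Finite (Module.Dual F (Fin (2*n+2) → F)) := Module.finite_of_finite F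
  haveI : Finite (Module.Dual F (Module.Dual F (Fin (2*n+2) → F))) := Module.finite_of_finite F
  letI : Fintype (Module.Dual F (Fin (2*n+2) → F)) := Fintype.ofFinite _
  letI : Fintype (Module.Dual F (Module.Dual F (Fin (2*n+2) → F))) := Fintype.ofFinite _
  exact aux_final n hn hq2 (by simp) S hhyp hP1 hP2
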